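/- arXiv:2001.00410 — 2 statements merged into one kernel-verified Lean document; each statement's English description precedes it below -/
import Mathlib

section
/- Let n ≥ 1 and let f : ℝⁿ → ℝ be a nonnegative, continuous, compactly supported function with ∫_{ℝⁿ} f dx = 1, and let u(t,x) = ∫_{ℝⁿ} (4πt)^{-n/2} exp(-‖x-y‖²/(4t)) f(y) dy. Then for every t > 0 the Fisher information satisfies I(u(t)) = ∫_{ℝⁿ} |∇ log u(t,x)|² u(t,x) dx ≤ n/(2t); in particular, t · (d/dt)H(u(t)) ≤ n/2 for all t > 0, so lim sup_{t→0+} t H'(u(t)) ≤ n/2. -/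
open Real MeasureTheory Filter

/-- The heat semigroup solution on `ℝⁿ` with initial datum `f`. -/
noncomputable def heatSol (n : ℕ) (f : EuclideanSpace ℝ (Fin n) → ℝ)
    (t : ℝ) (x : EuclideanSpace ℝ (Fin n)) : ℝ :=
  ∫ y, (4 * π * t) ^ (-(n : ℝ) / 2) * Real.exp (-‖x - y‖ ^ 2 / (4 * t)) * f y

/-- The Boltzmann–Shannon entropy of the heat solution at time `t`. -/
noncomputable def shannonEntropy (n : ℕ) (f : EuclideanSpace ℝ (Fin n) → ℝ) (t : ℝ) : ℝ :=
  -∫ x, heatSol n f t x * Real.log (heatSol n f t x)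

/-- The Fisher information of the heat solution at time `t`. -/
noncomputable def fisherInfo (n : ℕ) (f : EuclideanSpace ℝ (Fin n) → ℝ) (t : ℝ) : ℝ :=
  ∫ x, ‖gradient (fun y => Real.log (heatSol n f t y)) x‖ ^ 2 * heatSol n f t x


/-- Euclidean space. -/
abbrev HE (n : ℕ) := EuclideanSpace ℝ (Fin n)

/-- The heat kernel. -/
noncomputable def hk (n : ℕ) (t : ℝ) (v : HE n) : ℝ :=
  (4 * π * t) ^ (-(n : ℝ) / 2) * Real.exp (-‖v‖ ^ 2 / (4 * t))

lemma heatSol_eq (n : ℕ) (f : HE n → ℝ) (t : ℝ) (x : HE n) :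
    heatSol n f t x = ∫ y, hk n t (x - y) * f y := rfl

lemma hk_pos {n : ℕ} {t : ℝ} (ht : 0 < t) (v : HE n) : 0 < hk n t v := by
  unfold hk; positivity

lemma hk_le {n : ℕ} {t : ℝ} (ht : 0 < t) (v : HE n) :
    hk n t v ≤ (4 * π * t) ^ (-(n : ℝ) / 2) := by
  unfold hk
  have h1 : Real.exp (-‖v‖ ^ 2 / (4 * t)) ≤ 1 := by
    rw [Real.exp_le_one_iff]
    exact div_nonpos_of_nonpos_of_nonneg (by nlinarith [sq_nonneg ‖v‖]) (by positivity)
  have h2 : 0 ≤ (4 * π * t) ^ (-(n : ℝ) / 2) := by positivity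
  nlinarith

@[fun_prop]
lemma hk_cont {n : ℕ} {t : ℝ} : Continuous (hk n t) := by
  unfold hk; fun_prop

lemma hk_hasFDerivAt {n : ℕ} {t : ℝ} (ht : 0 < t) (v : HE n) :
    HasFDerivAt (hk n t) (-(hk n t v / (2 * t)) • innerSL ℝ v) v := by
  have h1 : HasFDerivAt (fun v : HE n => ‖v‖ ^ 2) (2 • innerSL ℝ v) v :=
    (hasStrictFDerivAt_norm_sq v).hasFDerivAt
  have h2 := (((h1.neg).mul_const ((4 * t)⁻¹)).exp).const_mul ((4 * π * t) ^ (-(n : ℝ) / 2))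
  refine (h2.congr_fderiv ?_)
  ext w
  simp [hk]
  simp only [div_eq_mul_inv]
  field_simp
  ring

/-- integrability of compactly supported products -/
lemma int_mul {n : ℕ} {f : HE n → ℝ} (hf_cont : Continuous f) (hf_supp : HasCompactSupport f)
    {F : HE n → ℝ} (hF : Continuous F) : Integrable (fun y => F y * f y) := by
  apply Continuous.integrable_of_hasCompactSupport (by fun_prop)
  exact hf_supp.mul_left

lemma exists_R {n : ℕ} {f : HE n → ℝ} (hf_supp : HasCompactSupport f) :
    ∃ R : ℝ, 0 ≤ R ∧ ∀ y, f y ≠ 0 → ‖y‖ ≤ R := by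
  obtain ⟨R, hR⟩ := hf_supp.isCompact.isBounded.exists_norm_le
  refine ⟨max R 0, le_max_right _ _, fun y hy => (hR y ?_).trans (le_max_left _ _)⟩
  exact subset_tsupport _ hy

section
variable {n : ℕ} {f : HE n → ℝ} (hf_cont : Continuous f) (hf_nonneg : ∀ x, 0 ≤ f x)
  (hf_supp : HasCompactSupport f) (hf_int : ∫ x, f x = 1)

include hf_cont hf_supp in
lemma heat_hasFDerivAt {t : ℝ} (ht : 0 < t) (x : HE n) :
    HasFDerivAt (heatSol n f t)
      (∫ y, (hk n t (x - y) * f y) • (-(1 / (2 * t)) • innerSL ℝ (x - y))) x := by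
  have key := hasFDerivAt_integral_of_dominated_of_fderiv_le (𝕜 := ℝ) (μ := (volume : Measure (HE n)))
    (F := fun x y => hk n t (x - y) * f y) (x₀ := x)
    (bound := fun y => ((4 * π * t) ^ (-(n : ℝ) / 2) * (1 / (2 * t)) * (‖x‖ + 1 + ‖y‖)) * |f y|)
    (s := Metric.ball x 1)
    (F' := fun x y => (hk n t (x - y) * f y) • (-(1 / (2 * t)) • innerSL ℝ (x - y)))
    (Metric.ball_mem_nhds x one_pos) ?_ ?_ ?_ ?_ ?_ ?_
  · exact key
  · exact Eventually.of_forall fun x => (by fun_prop : Continuous _).aestronglyMeasurable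
  · exact int_mul hf_cont hf_supp (by fun_prop)
  · exact (by fun_prop : Continuous _).aestronglyMeasurable
  · refine Eventually.of_forall fun y z hz => ?_
    rw [norm_smul, norm_smul, innerSL_apply_norm, norm_mul, norm_neg, Real.norm_eq_abs,
      Real.norm_eq_abs, Real.norm_eq_abs, abs_of_pos (hk_pos ht _),
      abs_of_pos (by positivity : 0 < 1 / (2 * t))]
    have h1 : ‖z - y‖ ≤ ‖x‖ + 1 + ‖y‖ := by
      have : ‖z - x‖ < 1 := by simpa [dist_eq_norm] using hz
      have h2 : z - y = (z - x) + x - y := by abel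
      calc ‖z - y‖ = ‖(z - x) + x - y‖ := by rw [← h2]
        _ ≤ ‖(z - x) + x‖ + ‖y‖ := norm_sub_le _ _
        _ ≤ ‖z - x‖ + ‖x‖ + ‖y‖ := by gcongr; exact norm_add_le _ _
        _ ≤ _ := by linarith
    calc hk n t (z - y) * |f y| * (1 / (2 * t) * ‖z - y‖)
        ≤ (4 * π * t) ^ (-(n : ℝ) / 2) * |f y| * (1 / (2 * t) * (‖x‖ + 1 + ‖y‖)) := by
          gcongr; exact hk_le ht _
      _ = _ := by ring
  · have : HasCompactSupport (fun y => |f y|) := hf_supp.abs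
    exact int_mul (f := fun y => |f y|) hf_cont.abs this (by fun_prop)
  · refine Eventually.of_forall fun y z hz => ?_
    have h1 := ((hk_hasFDerivAt ht (z - y)).comp z ((hasFDerivAt_id z).sub_const y)).mul_const (f y)
    refine h1.congr_fderiv ?_
    ext w
    simp
    ring

include hf_cont hf_nonneg hf_supp hf_int in
lemma heat_lower {R : ℝ} (_hR0 : 0 ≤ R) (hR : ∀ y, f y ≠ 0 → ‖y‖ ≤ R) {t : ℝ} (ht : 0 < t) (x : HE n) :
    (4 * π * t) ^ (-(n : ℝ) / 2) * Real.exp (-(2 * ‖x‖ ^ 2 + 2 * R ^ 2) / (4 * t)) ≤ heatSol n f t x := by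
  have h1 : (4 * π * t) ^ (-(n : ℝ) / 2) * Real.exp (-(2 * ‖x‖ ^ 2 + 2 * R ^ 2) / (4 * t)) =
    ∫ y, (4 * π * t) ^ (-(n : ℝ) / 2) * Real.exp (-(2 * ‖x‖ ^ 2 + 2 * R ^ 2) / (4 * t)) * f y := by
    rw [integral_const_mul, hf_int, mul_one]
  rw [h1, heatSol_eq]
  apply integral_mono
  · exact int_mul hf_cont hf_supp (by fun_prop)
  · exact int_mul hf_cont hf_supp (by fun_prop)
  · intro y
    by_cases hy : f y = 0
    · simp [hy]
    · apply mul_le_mul_of_nonneg_right _ (hf_nonneg y)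
      unfold hk
      gcongr
      have := hR y hy
      have h2 : ‖x - y‖ ≤ ‖x‖ + R := (norm_sub_le _ _).trans (by linarith)
      nlinarith [norm_nonneg (x - y), norm_nonneg x, sq_nonneg (‖x‖ - R)]

include hf_cont hf_nonneg hf_supp hf_int in
lemma heat_pos {t : ℝ} (ht : 0 < t) (x : HE n) : 0 < heatSol n f t x := by
  obtain ⟨R, hR0, hR⟩ := exists_R hf_supp
  refine lt_of_lt_of_le ?_ (heat_lower hf_cont hf_nonneg hf_supp hf_int hR0 hR ht x)
  positivity

include hf_cont hf_nonneg hf_supp hf_int in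
lemma heat_upper {t : ℝ} (ht : 0 < t) (x : HE n) :
    heatSol n f t x ≤ (4 * π * t) ^ (-(n : ℝ) / 2) := by
  have h1 : (4 * π * t) ^ (-(n : ℝ) / 2) = ∫ y, (4 * π * t) ^ (-(n : ℝ) / 2) * f y := by
    rw [integral_const_mul, hf_int, mul_one]
  rw [h1, heatSol_eq]
  apply integral_mono
  · exact int_mul hf_cont hf_supp (by fun_prop)
  · exact int_mul hf_cont hf_supp (by fun_prop)
  · intro y
    exact mul_le_mul_of_nonneg_right (hk_le ht _) (hf_nonneg y)

include hf_cont hf_nonneg hf_supp hf_int in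
lemma log_growth {t : ℝ} (ht : 0 < t) :
    ∃ C : ℝ, 0 ≤ C ∧ ∀ x, |Real.log (heatSol n f t x)| ≤ C * (1 + ‖x‖ ^ 2) := by
  obtain ⟨R, hR0, hR⟩ := exists_R hf_supp
  set K := (4 * π * t) ^ (-(n : ℝ) / 2) with hK
  have hKp : 0 < K := by positivity
  refine ⟨|Real.log K| + (2 + 2 * R ^ 2) / (4 * t), by positivity, fun x => ?_⟩
  have h1 := Real.log_le_log (heat_pos hf_cont hf_nonneg hf_supp hf_int ht x)
    (heat_upper hf_cont hf_nonneg hf_supp hf_int ht x)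
  have h2 := Real.log_le_log (by positivity)
    (heat_lower hf_cont hf_nonneg hf_supp hf_int hR0 hR ht x)
  rw [Real.log_mul (by positivity) (by positivity), Real.log_exp] at h2
  rw [← hK] at h1 h2
  have h3 : (2 * ‖x‖ ^ 2 + 2 * R ^ 2) / (4 * t) ≤ (2 + 2 * R ^ 2) / (4 * t) * (1 + ‖x‖ ^ 2) := by
    rw [div_mul_eq_mul_div]
    gcongr
    nlinarith [mul_nonneg (sq_nonneg R) (sq_nonneg ‖x‖)]
  have h4 : |Real.log K| ≤ |Real.log K| * (1 + ‖x‖ ^ 2) := by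
    nlinarith [mul_nonneg (abs_nonneg (Real.log K)) (sq_nonneg ‖x‖)]
  have h5 : 0 ≤ (2 + 2 * R ^ 2) / (4 * t) * (1 + ‖x‖ ^ 2) := by positivity
  rw [neg_div] at h2
  rw [abs_le]
  constructor <;> nlinarith [neg_abs_le (Real.log K), le_abs_self (Real.log K)]

include hf_cont hf_nonneg hf_supp hf_int in
lemma log_diff {t : ℝ} (ht : 0 < t) :
    Differentiable ℝ (fun x => Real.log (heatSol n f t x)) := fun x =>
  ((heat_hasFDerivAt hf_cont hf_supp ht x).log
    (heat_pos hf_cont hf_nonneg hf_supp hf_int ht x).ne').differentiableAt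

include hf_cont hf_supp in
lemma heat_continuous {t : ℝ} (ht : 0 < t) : Continuous (heatSol n f t) :=
  continuous_iff_continuousAt.2 fun x => (heat_hasFDerivAt hf_cont hf_supp ht x).continuousAt

include hf_cont hf_nonneg hf_supp hf_int in
/-- norm of the log gradient bounded by a conditional expectation -/
lemma log_grad_le {t : ℝ} (ht : 0 < t) (x : HE n) :
    ‖fderiv ℝ (fun x => Real.log (heatSol n f t x)) x‖ ≤
      (heatSol n f t x)⁻¹ * ∫ y, (hk n t (x - y) * (‖x - y‖ / (2 * t))) * f y := by
  have hp := heat_pos hf_cont hf_nonneg hf_supp hf_int ht x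
  rw [((heat_hasFDerivAt hf_cont hf_supp ht x).log hp.ne').fderiv, norm_smul, norm_inv,
    Real.norm_eq_abs, abs_of_pos hp]
  gcongr
  refine (norm_integral_le_integral_norm _).trans (le_of_eq ?_)
  congr 1
  ext y
  rw [norm_smul, norm_smul, innerSL_apply_norm, norm_mul, norm_neg, Real.norm_eq_abs,
      Real.norm_eq_abs, Real.norm_eq_abs, abs_of_pos (hk_pos ht _),
      abs_of_pos (by positivity : 0 < 1 / (2 * t)), abs_of_nonneg (hf_nonneg y)]
  ring

include hf_cont hf_nonneg hf_supp hf_int in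
lemma log_grad_growth {t : ℝ} (ht : 0 < t) :
    ∃ C : ℝ, 0 ≤ C ∧ ∀ x, ‖fderiv ℝ (fun x => Real.log (heatSol n f t x)) x‖ ≤ C * (1 + ‖x‖) := by
  obtain ⟨R, hR0, hR⟩ := exists_R hf_supp
  refine ⟨(1 + R) / (2 * t), by positivity, fun x => ?_⟩
  have hp := heat_pos hf_cont hf_nonneg hf_supp hf_int ht x
  refine (log_grad_le hf_cont hf_nonneg hf_supp hf_int ht x).trans ?_
  rw [inv_mul_le_iff₀ hp, heatSol_eq, ← integral_mul_const]
  apply integral_mono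
  · exact int_mul hf_cont hf_supp (by fun_prop)
  · exact (int_mul hf_cont hf_supp (by fun_prop)).mul_const _
  · intro y
    by_cases hy : f y = 0
    · simp [hy]
    · have := hR y hy
      have h2 : ‖x - y‖ ≤ (1 + R) * (1 + ‖x‖) := (norm_sub_le _ _).trans
        (by nlinarith [mul_nonneg hR0 (norm_nonneg x)])
      have h3 : ‖x - y‖ / (2 * t) ≤ (1 + R) / (2 * t) * (1 + ‖x‖) := by
        rw [div_mul_eq_mul_div]; gcongr
      have h4 : 0 ≤ hk n t (x - y) * f y := mul_nonneg (hk_pos ht _).le (hf_nonneg y)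
      calc _ = hk n t (x - y) * f y * (‖x - y‖ / (2 * t)) := by ring
        _ ≤ _ := mul_le_mul_of_nonneg_left h3 h4

include hf_cont hf_nonneg hf_supp hf_int in
/-- Cauchy-Schwarz -/
lemma log_grad_sq {t : ℝ} (ht : 0 < t) (x : HE n) :
    ‖fderiv ℝ (fun x => Real.log (heatSol n f t x)) x‖ ^ 2 * heatSol n f t x ≤
      ∫ y, (hk n t (x - y) * (‖x - y‖ / (2 * t)) ^ 2) * f y := by
  have hp := heat_pos hf_cont hf_nonneg hf_supp hf_int ht x
  have h1 := log_grad_le hf_cont hf_nonneg hf_supp hf_int ht x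
  set A := ∫ y, (hk n t (x - y) * (‖x - y‖ / (2 * t))) * f y with hA
  set u := heatSol n f t x with hu
  set c := u⁻¹ * A with hc
  have i1 : Integrable (fun y => (hk n t (x - y) * (‖x - y‖ / (2 * t))) * f y) :=
    int_mul hf_cont hf_supp (by fun_prop)
  have i2 : Integrable (fun y => (hk n t (x - y) * (‖x - y‖ / (2 * t)) ^ 2) * f y) :=
    int_mul hf_cont hf_supp (by fun_prop)
  have i3 : Integrable (fun y => hk n t (x - y) * f y) :=
    int_mul hf_cont hf_supp (by fun_prop)
  have h2 : 0 ≤ ∫ y, ((hk n t (x - y) * (‖x - y‖ / (2 * t)) ^ 2) * f y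
      - 2 * c * ((hk n t (x - y) * (‖x - y‖ / (2 * t))) * f y)) + c ^ 2 * (hk n t (x - y) * f y) := by
    apply integral_nonneg
    intro y
    have h4 : 0 ≤ hk n t (x - y) * f y := mul_nonneg (hk_pos ht _).le (hf_nonneg y)
    have := mul_nonneg h4 (sq_nonneg (‖x - y‖ / (2 * t) - c))
    simp only [Pi.zero_apply]
    linarith
  have i4 : Integrable (fun y => (hk n t (x - y) * (‖x - y‖ / (2 * t)) ^ 2) * f y
      - 2 * c * ((hk n t (x - y) * (‖x - y‖ / (2 * t))) * f y)) := i2.sub (i1.const_mul _)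
  rw [integral_add i4 (i3.const_mul _), integral_sub i2 (i1.const_mul _),
    integral_const_mul, integral_const_mul, ← hA, ← heatSol_eq, ← hu] at h2
  have h3 : A = c * u := by rw [hc]; field_simp
  have h5 : ‖fderiv ℝ (fun x => Real.log (heatSol n f t x)) x‖ ^ 2 ≤ c ^ 2 := by gcongr
  have h6 := mul_le_mul_of_nonneg_right h5 hp.le
  rw [h3] at h2
  nlinarith
end

/-- The Gaussian measure with density the heat kernel at time one. -/
noncomputable def gam (n : ℕ) : Measure (HE n) :=
  volume.withDensity (fun z => ENNReal.ofReal (hk n 1 z))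

/-- The measure with density `f`. -/
noncomputable def muf {n : ℕ} (f : HE n → ℝ) : Measure (HE n) :=
  volume.withDensity (fun z => ENNReal.ofReal (f z))

lemma lint_scale {n : ℕ} {r : ℝ} (hr : 0 < r) {h : HE n → ENNReal} (hh : Measurable h) :
    ∫⁻ v, h v = ∫⁻ z, ENNReal.ofReal (r ^ n) * h (r • z) := by
  rw [lintegral_const_mul _ (by fun_prop), ← lintegral_map (g := fun x : HE n => r • x) hh (by fun_prop),
    Measure.map_addHaar_smul _ hr.ne', lintegral_smul_measure, smul_eq_mul, ← mul_assoc,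
    ← ENNReal.ofReal_mul (by positivity), finrank_euclideanSpace_fin, abs_of_pos (by positivity),
    mul_inv_cancel₀ (by positivity), ENNReal.ofReal_one, one_mul]

lemma hk_scale {n : ℕ} {t : ℝ} (ht : 0 < t) (z : HE n) :
    (√t) ^ n * hk n t (√t • z) = hk n 1 z := by
  unfold hk
  rw [norm_smul, Real.norm_of_nonneg (Real.sqrt_nonneg t), mul_pow, Real.sq_sqrt ht.le,
    Real.mul_rpow (by positivity) ht.le, mul_one, mul_one]
  have h1 : -(t * ‖z‖ ^ 2) / (4 * t) = -‖z‖ ^ 2 / 4 := by field_simp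
  have h2 : √t ^ n * t ^ (-(n : ℝ) / 2) = 1 := by
    rw [Real.sqrt_eq_rpow, ← Real.rpow_natCast, ← Real.rpow_mul ht.le, ← Real.rpow_add ht]
    convert Real.rpow_zero t using 2
    ring
  rw [h1]
  calc _ = (√t ^ n * t ^ (-(n : ℝ) / 2)) * ((4 * π) ^ (-(n : ℝ) / 2) * Real.exp (-‖z‖ ^ 2 / 4)) := by ring
    _ = _ := by rw [h2, one_mul]

lemma gauss_int {n : ℕ} {b : ℝ} (hb : 0 < b) :
    ∫ z : HE n, (4 * π) ^ (-(n : ℝ) / 2) * Real.exp (-(b / 4) * ‖z‖ ^ 2) = b ^ (-(n : ℝ) / 2) := by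
  rw [integral_const_mul, GaussianFourier.integral_rexp_neg_mul_sq_norm (by positivity),
    finrank_euclideanSpace_fin]
  have : π / (b / 4) = (4 * π) * b⁻¹ := by field_simp
  rw [this, Real.mul_rpow (x := 4 * π) (y := b⁻¹) (by positivity) (by positivity), ← mul_assoc,
    ← Real.rpow_add (by positivity), Real.inv_rpow hb.le, ← Real.rpow_neg hb.le]
  have h : -(n : ℝ) / 2 + n / 2 = 0 := by ring
  rw [h, Real.rpow_zero, one_mul, neg_div]

lemma gauss_lint {n : ℕ} {b : ℝ} (hb : 0 < b) :
    ∫⁻ z : HE n, ENNReal.ofReal ((4 * π) ^ (-(n : ℝ) / 2) * Real.exp (-(b / 4) * ‖z‖ ^ 2))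
      = ENNReal.ofReal (b ^ (-(n : ℝ) / 2)) := by
  rw [← gauss_int hb, ofReal_integral_eq_lintegral_ofReal]
  · by_contra h
    have h1 := gauss_int (n := n) hb
    rw [integral_undef h] at h1
    have : 0 < b ^ (-(n : ℝ) / 2) := by positivity
    linarith
  · exact Eventually.of_forall fun z => by positivity

instance gam_prob (n : ℕ) : IsProbabilityMeasure (gam n) := by
  constructor
  rw [gam, withDensity_apply _ MeasurableSet.univ, Measure.restrict_univ]
  have := gauss_lint (n := n) (b := 1) one_pos
  rw [Real.one_rpow, ENNReal.ofReal_one] at this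
  rw [← this]
  congr 1
  ext z
  unfold hk
  congr 3
  · ring_nf
  · ring

/-- second moment -/
lemma gam_second (n : ℕ) : ∫⁻ z, ENNReal.ofReal (‖z‖ ^ 2) ∂(gam n) ≤ ENNReal.ofReal (2 * n) := by
  have key : ∀ e : ℝ, 0 < e → e < 1 / 4 → ∫⁻ z, ENNReal.ofReal (‖z‖ ^ 2) ∂(gam n) ≤
      ENNReal.ofReal (((1 - 4 * e) ^ (-(n : ℝ) / 2) - 1) / e) := by
    intro e he he'
    have h1 : ∫⁻ z, ENNReal.ofReal (1 + e * ‖z‖ ^ 2) ∂(gam n) ≤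
        ENNReal.ofReal ((1 - 4 * e) ^ (-(n : ℝ) / 2)) := by
      rw [← gauss_lint (n := n) (by linarith : 0 < 1 - 4 * e), gam,
        lintegral_withDensity_eq_lintegral_mul _ (by fun_prop) (by fun_prop)]
      apply lintegral_mono
      intro z
      simp only [Pi.mul_apply]
      rw [← ENNReal.ofReal_mul (hk_pos one_pos _).le]
      apply ENNReal.ofReal_le_ofReal
      have h2 : Real.exp (-((1 - 4 * e) / 4) * ‖z‖ ^ 2) =
          Real.exp (-‖z‖ ^ 2 / (4 * 1)) * Real.exp (e * ‖z‖ ^ 2) := by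
        rw [← Real.exp_add]; congr 1; ring
      rw [h2, ← mul_assoc]
      unfold hk
      rw [mul_one (4 * π)]
      gcongr
      linarith [Real.add_one_le_exp (e * ‖z‖ ^ 2)]
    have h3 : ∫⁻ z, ENNReal.ofReal (1 + e * ‖z‖ ^ 2) ∂(gam n) =
        1 + ENNReal.ofReal e * ∫⁻ z, ENNReal.ofReal (‖z‖ ^ 2) ∂(gam n) := by
      rw [← lintegral_const_mul _ (by fun_prop)]
      have : ∀ z : HE n, ENNReal.ofReal (1 + e * ‖z‖ ^ 2) =
          1 + ENNReal.ofReal e * ENNReal.ofReal (‖z‖ ^ 2) := by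
        intro z
        rw [ENNReal.ofReal_add zero_le_one (by positivity), ENNReal.ofReal_mul he.le,
          ENNReal.ofReal_one]
      simp_rw [this]
      rw [lintegral_add_left (by fun_prop)]
      simp
    rw [h3] at h1
    rw [ENNReal.ofReal_div_of_pos he, ENNReal.le_div_iff_mul_le (by simp [he]) (by simp),
      ENNReal.ofReal_sub _ zero_le_one, ENNReal.ofReal_one, mul_comm]
    exact ENNReal.le_sub_of_add_le_left (by simp) h1
  have hd : HasDerivAt (fun e : ℝ => (1 - 4 * e) ^ (-(n : ℝ) / 2)) (2 * n) 0 := by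
    have h1 : HasDerivAt (fun e : ℝ => 1 - 4 * e) (-4) 0 := by
      simpa using ((hasDerivAt_id (0 : ℝ)).const_mul 4).const_sub 1
    have h2 := h1.rpow_const (p := -(n : ℝ) / 2) (by left; norm_num)
    convert h2 using 1
    simp
    ring
  have hl : Tendsto (fun e : ℝ => ((1 - 4 * e) ^ (-(n : ℝ) / 2) - 1) / e)
      (nhdsWithin 0 (Set.Ioi 0)) (nhds (2 * n)) := by
    have h1 := (hasDerivAt_iff_tendsto_slope.1 hd).mono_left
      (nhdsWithin_mono (0 : ℝ) (s := Set.Ioi 0) (fun x hx => (ne_of_gt hx : x ≠ 0)))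
    refine h1.congr fun e => ?_
    simp [slope_def_field]
  refine ge_of_tendsto (ENNReal.tendsto_ofReal hl) ?_
  have : Set.Ioo (0 : ℝ) (1 / 4) ∈ nhdsWithin (0 : ℝ) (Set.Ioi 0) :=
    Ioo_mem_nhdsGT (by norm_num)
  filter_upwards [this] with e he
  exact key e he.1 he.2

section
variable {n : ℕ} {f : HE n → ℝ} (hf_cont : Continuous f) (hf_nonneg : ∀ x, 0 ≤ f x)
  (hf_supp : HasCompactSupport f) (hf_int : ∫ x, f x = 1)

include hf_cont hf_nonneg hf_supp hf_int in
lemma muf_prob : IsProbabilityMeasure (muf f) := by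
  constructor
  rw [muf, withDensity_apply _ MeasurableSet.univ, Measure.restrict_univ,
    ← ofReal_integral_eq_lintegral_ofReal (hf_cont.integrable_of_hasCompactSupport hf_supp)
      (Eventually.of_forall hf_nonneg), hf_int, ENNReal.ofReal_one]

instance muf_sfinite : SFinite (muf f) := by unfold muf; infer_instance

include hf_cont in
lemma transfer {t : ℝ} (ht : 0 < t) {Φ : HE n × HE n → ENNReal} (hΦ : Measurable Φ) :
    ∫⁻ p, Φ (p.1 + √t • p.2, p.1) ∂((muf f).prod (gam n)) =
      ∫⁻ x, ∫⁻ y, ENNReal.ofReal (hk n t (x - y) * f y) * Φ (x, y) := by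
  have hf_m : Measurable f := hf_cont.measurable
  have hk_m : ∀ t, Measurable (hk n t) := fun t => hk_cont.measurable
  rw [lintegral_lintegral_swap (by fun_prop), lintegral_prod _ (by fun_prop), muf,
    lintegral_withDensity_eq_lintegral_mul _ (by fun_prop)
      (Measurable.lintegral_prod_right' (f := fun p : HE n × HE n => Φ (p.1 + √t • p.2, p.1)) (by fun_prop))]
  congr 1
  ext y
  simp only [Pi.mul_apply]
  rw [← lintegral_add_right_eq_self (μ := (volume : Measure (HE n))) _ y, lint_scale (Real.sqrt_pos.2 ht) (by fun_prop), gam,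
    lintegral_withDensity_eq_lintegral_mul _ (by fun_prop) (by fun_prop),
    ← lintegral_const_mul _ (by fun_prop)]
  congr 1
  ext z
  simp only [Pi.mul_apply]
  rw [add_sub_cancel_right, ← hk_scale ht, ENNReal.ofReal_mul (hk_pos ht _).le,
    ENNReal.ofReal_mul (by positivity), add_comm y]
  ring

include hf_cont hf_nonneg hf_supp in
lemma ofReal_heat {t : ℝ} (ht : 0 < t) (x : HE n) {F : HE n → ℝ} (hF : Continuous F)
    (hF0 : ∀ y, 0 ≤ F y) :
    ENNReal.ofReal (∫ y, (hk n t (x - y) * F y) * f y) =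
      ∫⁻ y, ENNReal.ofReal (hk n t (x - y) * f y) * ENNReal.ofReal (F y) := by
  rw [ofReal_integral_eq_lintegral_ofReal (int_mul hf_cont hf_supp (by fun_prop))]
  · congr 1
    ext y
    rw [← ENNReal.ofReal_mul (mul_nonneg (hk_pos ht _).le (hf_nonneg y))]
    congr 1
    ring
  · exact Eventually.of_forall fun y =>
      mul_nonneg (mul_nonneg (hk_pos ht _).le (hF0 y)) (hf_nonneg y)

include hf_cont hf_nonneg hf_supp in
lemma map_eq {t : ℝ} (ht : 0 < t) :
    ((muf f).prod (gam n)).map (fun p => p.1 + √t • p.2) =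
      volume.withDensity (fun x => ENNReal.ofReal (heatSol n f t x)) := by
  have hu : Measurable (heatSol n f t) := (heat_continuous hf_cont hf_supp ht).measurable
  have hf_m : Measurable f := hf_cont.measurable
  have hk_m : ∀ t, Measurable (hk n t) := fun t => hk_cont.measurable
  refine Measure.ext_of_lintegral _ fun Ψ hΨ => ?_
  rw [lintegral_map hΨ (by fun_prop), lintegral_withDensity_eq_lintegral_mul _ (by fun_prop) hΨ]
  rw [transfer hf_cont ht (Φ := fun p => Ψ p.1) (by fun_prop)]
  congr 1
  ext x
  simp only [Pi.mul_apply]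
  rw [lintegral_mul_const _ (by fun_prop)]
  congr 1
  have := ofReal_heat hf_cont hf_nonneg hf_supp ht x (F := fun _ => 1) (by fun_prop) (by simp)
  simp only [mul_one, ENNReal.ofReal_one] at this
  rw [← this, heatSol_eq]

include hf_cont hf_nonneg hf_supp hf_int in
lemma fisher_lint {t : ℝ} (ht : 0 < t) :
    ∫⁻ x, ENNReal.ofReal (‖fderiv ℝ (fun x => Real.log (heatSol n f t x)) x‖ ^ 2 * heatSol n f t x) ≤
      ENNReal.ofReal (n / (2 * t)) := by
  have := muf_prob hf_cont hf_nonneg hf_supp hf_int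
  calc _ ≤ ∫⁻ x, ENNReal.ofReal (∫ y, (hk n t (x - y) * (‖x - y‖ / (2 * t)) ^ 2) * f y) :=
        lintegral_mono fun x => ENNReal.ofReal_le_ofReal
          (log_grad_sq hf_cont hf_nonneg hf_supp hf_int ht x)
    _ = ∫⁻ x, ∫⁻ y, ENNReal.ofReal (hk n t (x - y) * f y) *
          ENNReal.ofReal ((‖x - y‖ / (2 * t)) ^ 2) := by
        congr 1
        ext x
        rw [ofReal_heat hf_cont hf_nonneg hf_supp ht x (F := fun y => (‖x - y‖ / (2 * t)) ^ 2)
          (by fun_prop) (fun y => by positivity)]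
    _ = ∫⁻ p, ENNReal.ofReal ((‖(p.1 + √t • p.2) - p.1‖ / (2 * t)) ^ 2) ∂((muf f).prod (gam n)) := by
        rw [transfer hf_cont ht
          (Φ := fun p => ENNReal.ofReal ((‖p.1 - p.2‖ / (2 * t)) ^ 2)) (by fun_prop)]
    _ = ∫⁻ p, ENNReal.ofReal (1 / (4 * t)) * ENNReal.ofReal (‖p.2‖ ^ 2) ∂((muf f).prod (gam n)) := by
        congr 1
        ext p
        rw [← ENNReal.ofReal_mul (by positivity), add_sub_cancel_left, norm_smul,
          Real.norm_of_nonneg (Real.sqrt_nonneg t), div_pow, mul_pow, Real.sq_sqrt ht.le]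
        congr 1
        field_simp
        norm_num
    _ = ENNReal.ofReal (1 / (4 * t)) * ∫⁻ z, ENNReal.ofReal (‖z‖ ^ 2) ∂(gam n) := by
        rw [lintegral_const_mul _ (by fun_prop), lintegral_prod _ (by fun_prop)]
        simp
    _ ≤ ENNReal.ofReal (1 / (4 * t)) * ENNReal.ofReal (2 * n) := by
        gcongr; exact gam_second n
    _ = _ := by
        rw [← ENNReal.ofReal_mul (by positivity)]
        congr 1
        field_simp
        norm_num
end

section
variable {n : ℕ} {f : HE n → ℝ} (hf_cont : Continuous f) (hf_nonneg : ∀ x, 0 ≤ f x)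
  (hf_supp : HasCompactSupport f) (hf_int : ∫ x, f x = 1)

lemma gam_int_sq : Integrable (fun z => ‖z‖ ^ 2) (gam n) := by
  refine ⟨by fun_prop, ?_⟩
  rw [hasFiniteIntegral_iff_ofReal (Eventually.of_forall fun z => by positivity)]
  exact (gam_second n).trans_lt ENNReal.ofReal_lt_top

lemma gam_sq_le : ∫ z, ‖z‖ ^ 2 ∂(gam n) ≤ 2 * n := by
  rw [integral_eq_lintegral_of_nonneg_ae (Eventually.of_forall fun z => by positivity) (by fun_prop)]
  exact ENNReal.toReal_le_of_le_ofReal (by positivity) (gam_second n)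

include hf_cont hf_nonneg hf_supp in
lemma muf_int_sq : Integrable (fun z => ‖z‖ ^ 2) (muf f) := by
  have hf_m : Measurable f := hf_cont.measurable
  rw [muf, integrable_withDensity_iff_integrable_smul' (by fun_prop) (by simp)]
  refine (int_mul hf_cont hf_supp (F := fun z => ‖z‖ ^ 2) (by fun_prop)).congr
    (Eventually.of_forall fun z => ?_)
  simp [ENNReal.toReal_ofReal (hf_nonneg z), mul_comm]

include hf_cont hf_nonneg hf_supp hf_int in
lemma poly_int : Integrable (fun p : HE n × HE n => 1 + ‖p.1‖ ^ 2 + ‖p.2‖ ^ 2)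
    ((muf f).prod (gam n)) := by
  have := muf_prob hf_cont hf_nonneg hf_supp hf_int
  exact ((integrable_const _).add ((muf_int_sq hf_cont hf_nonneg hf_supp).comp_fst _)).add
    (gam_int_sq.comp_snd _)

include hf_cont hf_nonneg hf_supp hf_int in
lemma growth_int {F : HE n → ℝ} (hF : Measurable F) {C : ℝ} (hC : 0 ≤ C)
    (hb : ∀ x, |F x| ≤ C * (1 + ‖x‖ ^ 2)) (r : ℝ) :
    Integrable (fun p : HE n × HE n => F (p.1 + r • p.2)) ((muf f).prod (gam n)) := by
  refine ((poly_int hf_cont hf_nonneg hf_supp hf_int).const_mul (C * (2 + 2 * r ^ 2))).mono'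
    (hF.comp (by fun_prop : Measurable (fun p : HE n × HE n => p.1 + r • p.2))).aestronglyMeasurable
    (Eventually.of_forall fun p => ?_)
  rw [Real.norm_eq_abs, mul_assoc]
  refine (hb _).trans (mul_le_mul_of_nonneg_left ?_ hC)
  have h1 : ‖p.1 + r • p.2‖ ≤ ‖p.1‖ + |r| * ‖p.2‖ := (norm_add_le _ _).trans (by rw [norm_smul, Real.norm_eq_abs])
  have h2 : ‖p.1 + r • p.2‖ ^ 2 ≤ (‖p.1‖ + |r| * ‖p.2‖) ^ 2 := by gcongr
  have h3 : (‖p.1‖ + |r| * ‖p.2‖) ^ 2 ≤ 2 * ‖p.1‖ ^ 2 + 2 * (r ^ 2 * ‖p.2‖ ^ 2) := by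
    rw [← sq_abs r]
    nlinarith [sq_nonneg (‖p.1‖ - |r| * ‖p.2‖)]
  nlinarith [mul_nonneg (sq_nonneg r) (sq_nonneg ‖p.1‖), sq_nonneg ‖p.2‖, sq_nonneg r]

include hf_cont hf_nonneg hf_supp hf_int in
lemma transfer_int {F : HE n → ℝ} (hF : Measurable F) {C : ℝ} (hC : 0 ≤ C)
    (hb : ∀ x, |F x| ≤ C * (1 + ‖x‖ ^ 2)) {t : ℝ} (ht : 0 < t) :
    Integrable (fun x => heatSol n f t x * F x) ∧
    ∫ x, heatSol n f t x * F x = ∫ p, F (p.1 + √t • p.2) ∂((muf f).prod (gam n)) := by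
  have hu : Measurable (heatSol n f t) := (heat_continuous hf_cont hf_supp ht).measurable
  have hp := fun x => (heat_pos hf_cont hf_nonneg hf_supp hf_int ht x).le
  have h1 := growth_int hf_cont hf_nonneg hf_supp hf_int hF hC hb (√t)
  have hm : Measurable (fun p : HE n × HE n => p.1 + √t • p.2) := by fun_prop
  constructor
  · have h2 := (integrable_map_measure (f := fun p : HE n × HE n => p.1 + √t • p.2)
      hF.aestronglyMeasurable hm.aemeasurable).2 h1
    rw [map_eq hf_cont hf_nonneg hf_supp ht,
      integrable_withDensity_iff_integrable_smul' (by fun_prop) (by simp)] at h2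
    refine h2.congr (Eventually.of_forall fun x => ?_)
    simp [ENNReal.toReal_ofReal (hp x)]
  · rw [← integral_map hm.aemeasurable hF.aestronglyMeasurable,
      map_eq hf_cont hf_nonneg hf_supp ht,
      integral_withDensity_eq_integral_toReal_smul (by fun_prop) (by simp)]
    congr 1
    ext x
    simp [ENNReal.toReal_ofReal (hp x)]

include hf_cont hf_nonneg hf_supp hf_int in
lemma fisher_le {t : ℝ} (ht : 0 < t) :
    ∫ x, heatSol n f t x * ‖fderiv ℝ (fun x => Real.log (heatSol n f t x)) x‖ ^ 2 ≤ n / (2 * t) := by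
  have hp := fun x => (heat_pos hf_cont hf_nonneg hf_supp hf_int ht x).le
  have hu : Measurable (heatSol n f t) := (heat_continuous hf_cont hf_supp ht).measurable
  have hd := measurable_fderiv ℝ (fun x => Real.log (heatSol n f t x))
  rw [integral_eq_lintegral_of_nonneg_ae
    (Eventually.of_forall fun x => mul_nonneg (hp x) (sq_nonneg _))
    (by fun_prop : Measurable _).aestronglyMeasurable]
  refine ENNReal.toReal_le_of_le_ofReal (by positivity) ?_
  simp_rw [mul_comm (heatSol n f t _)]
  exact fisher_lint hf_cont hf_nonneg hf_supp hf_int ht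

lemma fisherInfo_eq (t : ℝ) :
    fisherInfo n f t =
      ∫ x, heatSol n f t x * ‖fderiv ℝ (fun x => Real.log (heatSol n f t x)) x‖ ^ 2 := by
  unfold fisherInfo gradient
  simp_rw [LinearIsometryEquiv.norm_map, mul_comm]

include hf_cont hf_nonneg hf_supp hf_int in
lemma phi_deriv {t : ℝ} (ht : 0 < t) :
    ∃ D : ℝ, -(n / √t) ≤ D ∧
      HasDerivAt (fun r : ℝ => ∫ p, Real.log (heatSol n f t (p.1 + r • p.2))
        ∂((muf f).prod (gam n))) D (√t) := by
  have := muf_prob hf_cont hf_nonneg hf_supp hf_int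
  obtain ⟨C, hC, hCb⟩ := log_grad_growth hf_cont hf_nonneg hf_supp hf_int ht
  obtain ⟨C', hC', hCb'⟩ := log_growth hf_cont hf_nonneg hf_supp hf_int ht
  have hLd := log_diff hf_cont hf_nonneg hf_supp hf_int ht
  have hfish := fisher_le hf_cont hf_nonneg hf_supp hf_int ht
  have hd : Measurable (fderiv ℝ (fun x => Real.log (heatSol n f t x))) :=
    measurable_fderiv ℝ (fun x => Real.log (heatSol n f t x))
  have hρ : 0 < √t := Real.sqrt_pos.2 ht
  have hρ2 : √t ^ 2 = t := Real.sq_sqrt ht.le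
  have hLe : ∀ y, Real.log (heatSol n f t y) = (fun x => Real.log (heatSol n f t x)) y := fun _ => rfl
  set u := heatSol n f t with hu
  set L : HE n → ℝ := fun x => Real.log (u x) with hL
  have hLm : Measurable L := hLd.continuous.measurable
  set ρ := √t with hρdef
  set P := (muf f).prod (gam n) with hP
  have hdm : StronglyMeasurable (fun p : HE n × HE n => fderiv ℝ L (p.1 + ρ • p.2)) :=
    (hd.comp (by fun_prop : Measurable (fun p : HE n × HE n => p.1 + ρ • p.2))).stronglyMeasurable
  have hkey := hasDerivAt_integral_of_dominated_loc_of_deriv_le (𝕜 := ℝ) (μ := P)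
    (F := fun r p => L (p.1 + r • p.2)) (x₀ := ρ) (s := Metric.ball ρ 1)
    (F' := fun r p => fderiv ℝ L (p.1 + r • p.2) p.2)
    (bound := fun p => C * (2 + ρ) * (1 + ‖p.1‖ ^ 2 + ‖p.2‖ ^ 2))
    (Metric.ball_mem_nhds ρ one_pos)
    (Eventually.of_forall fun r => (hLm.comp
      (by fun_prop : Measurable (fun p : HE n × HE n => p.1 + r • p.2))).aestronglyMeasurable)
    (growth_int hf_cont hf_nonneg hf_supp hf_int hLm hC' hCb' ρ)
    ?_ ?_ ?_ ?_
  · obtain ⟨hDi, hD⟩ := hkey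
    refine ⟨_, ?_, hD⟩
    have hg2 : ∀ x, |‖fderiv ℝ L x‖ ^ 2| ≤ (2 * C ^ 2) * (1 + ‖x‖ ^ 2) := by
      intro x
      rw [abs_of_nonneg (sq_nonneg _)]
      have h1 : ‖fderiv ℝ L x‖ ^ 2 ≤ (C * (1 + ‖x‖)) ^ 2 := by gcongr; exact hCb x
      have h2 : (1 + ‖x‖) ^ 2 ≤ 2 * (1 + ‖x‖ ^ 2) := by nlinarith [sq_nonneg (1 - ‖x‖)]
      nlinarith [mul_le_mul_of_nonneg_left h2 (sq_nonneg C)]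
    have hgm : Measurable (fun x => ‖fderiv ℝ L x‖ ^ 2) := by fun_prop
    have hgi := growth_int hf_cont hf_nonneg hf_supp hf_int hgm (by positivity) hg2 ρ
    have hge := (transfer_int hf_cont hf_nonneg hf_supp hf_int hgm (by positivity) hg2 ht).2
    have hzi : Integrable (fun p : HE n × HE n => ‖p.2‖ ^ 2) P := gam_int_sq.comp_snd _
    have hze : ∫ p : HE n × HE n, ‖p.2‖ ^ 2 ∂P = ∫ z, ‖z‖ ^ 2 ∂(gam n) := by
      rw [hP, integral_fun_snd (fun z : HE n => ‖z‖ ^ 2)]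
      simp
    have hzl := gam_sq_le (n := n)
    rw [hge] at hfish
    have hmono : ∫ p : HE n × HE n, -(ρ * ‖fderiv ℝ L (p.1 + ρ • p.2)‖ ^ 2 + (1 / (4 * ρ)) * ‖p.2‖ ^ 2) ∂P
        ≤ ∫ p : HE n × HE n, fderiv ℝ L (p.1 + ρ • p.2) p.2 ∂P := by
      apply integral_mono ((hgi.const_mul ρ).add (hzi.const_mul _)).neg hDi
      intro p
      have h1 : |fderiv ℝ L (p.1 + ρ • p.2) p.2| ≤ ‖fderiv ℝ L (p.1 + ρ • p.2)‖ * ‖p.2‖ :=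
        (fderiv ℝ L (p.1 + ρ • p.2)).le_opNorm p.2
      have h2 := neg_abs_le (fderiv ℝ L (p.1 + ρ • p.2) p.2)
      set a := ‖fderiv ℝ L (p.1 + ρ • p.2)‖
      set b := ‖p.2‖
      have h3 : a * b ≤ ρ * a ^ 2 + 1 / (4 * ρ) * b ^ 2 := by
        have : ρ * a ^ 2 + 1 / (4 * ρ) * b ^ 2 - a * b = (2 * ρ * a - b) ^ 2 / (4 * ρ) := by
          field_simp; ring
        have h4 : 0 ≤ (2 * ρ * a - b) ^ 2 / (4 * ρ) := by positivity
        linarith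
      change -(ρ * a ^ 2 + 1 / (4 * ρ) * b ^ 2) ≤ fderiv ℝ L (p.1 + ρ • p.2) p.2
      linarith
    rw [integral_neg, integral_add (hgi.const_mul ρ) (hzi.const_mul _), integral_const_mul,
      integral_const_mul, hze] at hmono
    refine le_trans ?_ hmono
    have e1 := mul_le_mul_of_nonneg_left hfish hρ.le
    have e2 := mul_le_mul_of_nonneg_left hzl (by positivity : 0 ≤ 1 / (4 * ρ))
    have e3 : ρ * (n / (2 * t)) + 1 / (4 * ρ) * (2 * n) = n / ρ := by
      rw [← hρ2]; field_simp; ring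
    linarith
  · have h0 : Continuous (fun q : (HE n →L[ℝ] ℝ) × HE n => q.1 q.2) := by fun_prop
    exact (h0.comp_stronglyMeasurable (hdm.prodMk
      (measurable_snd.stronglyMeasurable))).aestronglyMeasurable
  · refine Eventually.of_forall fun p r hr => ?_
    have hr1 : |r| ≤ ρ + 1 := by
      have : |r - ρ| < 1 := by simpa [Real.dist_eq] using hr
      rw [abs_lt] at this
      rw [abs_le]; constructor <;> linarith
    refine ((fderiv ℝ L (p.1 + r • p.2)).le_opNorm p.2).trans ?_
    have h1 : ‖p.1 + r • p.2‖ ≤ ‖p.1‖ + (ρ + 1) * ‖p.2‖ :=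
      (norm_add_le _ _).trans (by rw [norm_smul, Real.norm_eq_abs]; gcongr)
    have h2 := hCb (p.1 + r • p.2)
    calc _ ≤ (C * (1 + (‖p.1‖ + (ρ + 1) * ‖p.2‖))) * ‖p.2‖ := by
          gcongr
          exact h2.trans (by gcongr)
      _ = C * ((1 + (‖p.1‖ + (ρ + 1) * ‖p.2‖)) * ‖p.2‖) := by ring
      _ ≤ C * ((2 + ρ) * (1 + ‖p.1‖ ^ 2 + ‖p.2‖ ^ 2)) := by
          apply mul_le_mul_of_nonneg_left _ hC
          nlinarith [sq_nonneg (1 - ‖p.2‖), sq_nonneg (‖p.1‖ - ‖p.2‖), mul_nonneg hρ.le (sq_nonneg ‖p.1‖)]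
      _ = _ := by ring
  · exact (poly_int hf_cont hf_nonneg hf_supp hf_int).const_mul _
  · refine Eventually.of_forall fun p r hr => ?_
    have h1 : HasDerivAt (fun r : ℝ => p.1 + r • p.2) p.2 r := by
      simpa using ((hasDerivAt_id r).smul_const p.2).const_add p.1
    exact (hLd (p.1 + r • p.2)).hasFDerivAt.comp_hasDerivAt r h1

include hf_cont hf_nonneg hf_supp hf_int in
lemma gibbs {s t : ℝ} (hs : 0 < s) (ht : 0 < t) :
    shannonEntropy n f s ≤ -∫ p, Real.log (heatSol n f t (p.1 + √s • p.2))
        ∂((muf f).prod (gam n)) := by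
  have hLm : ∀ t, 0 < t → Measurable (fun x => Real.log (heatSol n f t x)) := fun t ht =>
    (log_diff hf_cont hf_nonneg hf_supp hf_int ht).continuous.measurable
  obtain ⟨C, hC, hCb⟩ := log_growth hf_cont hf_nonneg hf_supp hf_int ht
  obtain ⟨C', hC', hCb'⟩ := log_growth hf_cont hf_nonneg hf_supp hf_int hs
  obtain ⟨i1, e1⟩ := transfer_int hf_cont hf_nonneg hf_supp hf_int (hLm t ht) hC hCb hs
  obtain ⟨i2, -⟩ := transfer_int hf_cont hf_nonneg hf_supp hf_int (hLm s hs) hC' hCb' hs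
  have h1 : ∀ r, 0 < r → Integrable (heatSol n f r) ∧ ∫ x, heatSol n f r x = 1 := by
    intro r hr
    have := muf_prob hf_cont hf_nonneg hf_supp hf_int
    have := transfer_int hf_cont hf_nonneg hf_supp hf_int (F := fun _ => 1) measurable_const
      (C := 1) zero_le_one (fun x => by simp) hr
    simpa using this
  rw [← e1, shannonEntropy, neg_le_neg_iff]
  have h2 : ∫ x, heatSol n f s x * Real.log (heatSol n f t x) ≤
      ∫ x, (heatSol n f s x * Real.log (heatSol n f s x) + (heatSol n f t x - heatSol n f s x)) := by
    apply integral_mono i1 (i2.add ((h1 t ht).1.sub (h1 s hs).1))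
    intro x
    have hps := heat_pos hf_cont hf_nonneg hf_supp hf_int hs x
    have hpt := heat_pos hf_cont hf_nonneg hf_supp hf_int ht x
    have h3 := Real.log_le_sub_one_of_pos (div_pos hpt hps)
    rw [Real.log_div hpt.ne' hps.ne'] at h3
    have h4 := mul_le_mul_of_nonneg_left h3 hps.le
    have h5 : heatSol n f s x * (heatSol n f t x / heatSol n f s x - 1) =
      heatSol n f t x - heatSol n f s x := by field_simp
    rw [h5] at h4
    change heatSol n f s x * Real.log (heatSol n f t x) ≤
      heatSol n f s x * Real.log (heatSol n f s x) + (heatSol n f t x - heatSol n f s x)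
    linarith
  rw [integral_add i2 (g := fun x => heatSol n f t x - heatSol n f s x)
    ((h1 t ht).1.sub (h1 s hs).1), integral_sub (h1 t ht).1 (h1 s hs).1, (h1 t ht).2, (h1 s hs).2] at h2
  linarith

include hf_cont hf_nonneg hf_supp hf_int in
lemma entropy_eq {t : ℝ} (ht : 0 < t) :
    shannonEntropy n f t = -∫ p, Real.log (heatSol n f t (p.1 + √t • p.2))
        ∂((muf f).prod (gam n)) := by
  obtain ⟨C, hC, hCb⟩ := log_growth hf_cont hf_nonneg hf_supp hf_int ht
  rw [shannonEntropy, (transfer_int hf_cont hf_nonneg hf_supp hf_int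
    (log_diff hf_cont hf_nonneg hf_supp hf_int ht).continuous.measurable hC hCb ht).2]

include hf_cont hf_nonneg hf_supp hf_int in
lemma entropy_deriv {t : ℝ} (ht : 0 < t) :
    t * deriv (shannonEntropy n f) t ≤ n / 2 := by
  by_cases hdiff : DifferentiableAt ℝ (shannonEntropy n f) t
  swap
  · rw [deriv_zero_of_not_differentiableAt hdiff, mul_zero]; positivity
  obtain ⟨D, hD, hder⟩ := phi_deriv hf_cont hf_nonneg hf_supp hf_int ht
  have h1 := hder.comp t (Real.hasDerivAt_sqrt ht.ne')
  have h2 := h1.neg.sub hdiff.hasDerivAt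
  have hmin := IsLocalMin.hasDerivAt_eq_zero (a := t) ?_ h2
  · have h3 : deriv (shannonEntropy n f) t = -(D * (1 / (2 * √t))) := by linarith
    have hρ : 0 < √t := Real.sqrt_pos.2 ht
    have hρ2 : √t ^ 2 = t := Real.sq_sqrt ht.le
    have h4 : t * deriv (shannonEntropy n f) t = (√t / 2) * (-D) := by
      rw [h3]; nth_rw 1 [← hρ2]; field_simp
    have h5 : √t / 2 * (n / √t) = n / 2 := by field_simp
    rw [h4, ← h5]
    exact mul_le_mul_of_nonneg_left (by linarith) (by positivity)
  · filter_upwards [Ioi_mem_nhds ht] with s hs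
    have g1 := gibbs hf_cont hf_nonneg hf_supp hf_int (s := s) hs ht
    have g2 := entropy_eq hf_cont hf_nonneg hf_supp hf_int ht
    simp only [Pi.sub_apply, Pi.neg_apply, Function.comp]
    linarith
end

lemma limsup_bound {g : ℝ → ℝ} {a : ℝ} (ha : 0 ≤ a) (h : ∀ t, 0 < t → g t ≤ a) :
    Filter.limsup g (nhdsWithin 0 (Set.Ioi 0)) ≤ a := by
  rw [Filter.limsup_eq]
  have hmem : a ∈ {b | ∀ᶠ t in nhdsWithin 0 (Set.Ioi 0), g t ≤ b} := by
    filter_upwards [self_mem_nhdsWithin] with t ht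
    exact h t ht
  by_cases hb : BddBelow {b | ∀ᶠ t in nhdsWithin 0 (Set.Ioi 0), g t ≤ b}
  · exact csInf_le hb hmem
  · rw [Real.sInf_of_not_bddBelow hb]; exact ha

/-- Fisher information bound from the Li–Yau Harnack inequality: `I(u(t)) ≤ n/(2t)`,
hence `t·H'(u(t)) ≤ n/2` and `limsup_{t→0⁺} t·H'(u(t)) ≤ n/2`. -/
theorem fisher_info_le (n : ℕ) (hn : 1 ≤ n)
    (f : EuclideanSpace ℝ (Fin n) → ℝ)
    (hf_cont : Continuous f) (hf_nonneg : ∀ x, 0 ≤ f x)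
    (hf_supp : HasCompactSupport f)
    (hf_int : ∫ x, f x = 1) :
    (∀ t : ℝ, 0 < t → fisherInfo n f t ≤ (n : ℝ) / (2 * t)) ∧
    (∀ t : ℝ, 0 < t → t * deriv (shannonEntropy n f) t ≤ (n : ℝ) / 2) ∧
    Filter.limsup (fun t => t * deriv (shannonEntropy n f) t)
      (nhdsWithin 0 (Set.Ioi 0)) ≤ (n : ℝ) / 2 := by
  refine ⟨fun t ht => ?_, fun t ht => ?_, ?_⟩
  · rw [fisherInfo_eq]
    exact fisher_le hf_cont hf_nonneg hf_supp hf_int ht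
  · exact entropy_deriv hf_cont hf_nonneg hf_supp hf_int ht
  · exact limsup_bound (by positivity) fun t ht =>
      entropy_deriv hf_cont hf_nonneg hf_supp hf_int ht
end

section
/- Let n ≥ 1 and let f : ℝⁿ → ℝ be a smooth function with ∫_{ℝⁿ} f² dx = 1 and ∫_{ℝⁿ} |∇f|² dx < ∞, such that f² log f² is integrable. Then the Stam-type logarithmic Sobolev inequality holds: ∫_{ℝⁿ} f² log f² dx ≤ (n/2) log( (2/(πen)) ∫_{ℝⁿ} |∇f|² dx ). -/
open Real MeasureTheory

/-- Existence of the one-dimensional transport map. -/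
lemma exists_transport (r R : ℝ) (hr : 0 < r) (h : ℝ → ℝ) (hc : Continuous h)
    (hpos : ∀ x, 0 < h x)
    (hintg : ∫ x in (-R)..R, h x = ∫ t in (-r)..r, exp (-(t^2)/2)) :
    ∃ T : ℝ → ℝ, Continuous T ∧ ∀ x ∈ Set.Icc (-R) R,
      HasDerivAt T (h x * exp ((T x)^2/2)) x := by
  set q : ℝ → ℝ := fun t => exp (-(min (t^2) (r^2))/2) with hq
  have hqc : Continuous q := by fun_prop
  have hqpos : ∀ t, 0 < q t := fun t => exp_pos _
  set Φ : ℝ → ℝ := fun t => ∫ u in (-r)..t, q u with hΦ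
  have hΦd : ∀ t, HasDerivAt Φ (q t) t := fun t =>
    intervalIntegral.integral_hasDerivAt_right (hqc.intervalIntegrable _ _)
      (hqc.stronglyMeasurableAtFilter _ _) hqc.continuousAt
  have hΦm : StrictMono Φ := strictMono_of_hasDerivAt_pos hΦd hqpos
  have hΦc : Continuous Φ := continuous_iff_continuousAt.2 fun t => (hΦd t).continuousAt
  set c := exp (-(r^2)/2) with hcdef
  have hcpos : 0 < c := exp_pos _
  have hqlow : ∀ t, c ≤ q t := by
    intro t
    apply exp_le_exp.2
    have := min_le_right (t^2) (r^2)
    linarith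
  have hmono : Monotone (fun t => Φ t - c * t) := by
    apply monotone_of_hasDerivAt_nonneg (f' := fun t => q t - c)
    · intro t
      have h1 := (hΦd t).sub ((hasDerivAt_id t).const_mul c)
      rw [mul_one] at h1
      exact h1
    · intro t; simpa using hqlow t
  have hsurj : Function.Surjective Φ := by
    apply hΦc.surjective
    · have : Filter.Tendsto (fun t => (Φ 0 - c*0) + c * t) Filter.atTop Filter.atTop :=
        Filter.tendsto_atTop_add_const_left _ _ (Filter.tendsto_id.const_mul_atTop hcpos)
      refine Filter.tendsto_atTop_mono' _ ?_ this
      filter_upwards [Filter.eventually_ge_atTop 0] with t ht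
      have := hmono ht
      simp only at this
      linarith
    · have : Filter.Tendsto (fun t => (Φ 0 - c*0) + c * t) Filter.atBot Filter.atBot :=
        Filter.tendsto_atBot_add_const_left _ _ (Filter.tendsto_id.const_mul_atBot hcpos)
      refine Filter.tendsto_atBot_mono' _ ?_ this
      filter_upwards [Filter.eventually_le_atBot 0] with t ht
      have := hmono ht
      simp only at this
      linarith
  set e := hΦm.orderIsoOfSurjective Φ hsurj with he
  have he1 : ∀ t, e t = Φ t := fun t => rfl
  set G : ℝ → ℝ := fun x => ∫ u in (-R)..x, h u with hG
  have hGd : ∀ t, HasDerivAt G (h t) t := fun t =>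
    intervalIntegral.integral_hasDerivAt_right (hc.intervalIntegrable _ _)
      (hc.stronglyMeasurableAtFilter _ _) hc.continuousAt
  have hGm : StrictMono G := strictMono_of_hasDerivAt_pos hGd hpos
  have hGc : Continuous G := continuous_iff_continuousAt.2 fun t => (hGd t).continuousAt
  have hec : Continuous e.symm := e.symm.continuous
  have hΦe : ∀ y, Φ (e.symm y) = y := fun y => e.apply_symm_apply y
  refine ⟨fun x => e.symm (G x), hec.comp hGc, ?_⟩
  intro x hx
  have hes : HasDerivAt e.symm (q (e.symm (G x)))⁻¹ (G x) :=
    HasDerivAt.of_local_left_inverse hec.continuousAt (hΦd _) (hqpos _).ne'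
      (Filter.Eventually.of_forall hΦe)
  have hcomp := hes.comp x (hGd x)
  have hGl : 0 ≤ G x := by
    have := hGm.monotone hx.1
    simpa [hG] using this
  have hGu : G x ≤ Φ r := by
    have h1 := hGm.monotone hx.2
    have h2 : G R = Φ r := by
      simp only [hG, hΦ]
      rw [hintg]
      apply intervalIntegral.integral_congr
      intro t ht
      rw [Set.uIcc_of_le (by linarith)] at ht
      have : t^2 ≤ r^2 := by nlinarith [ht.1, ht.2]
      simp [hq, min_eq_left this]
    linarith
  have hTl : -r ≤ e.symm (G x) := by
    rw [← hΦm.le_iff_le, hΦe]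
    simpa [hΦ] using hGl
  have hTu : e.symm (G x) ≤ r := by
    rw [← hΦm.le_iff_le, hΦe]
    exact hGu
  have hsq : (e.symm (G x))^2 ≤ r^2 := by nlinarith
  have hq2 : (q (e.symm (G x)))⁻¹ = exp ((e.symm (G x))^2/2) := by
    simp only [hq, min_eq_left hsq]
    rw [← exp_neg]; congr 1; ring
  rw [hq2, mul_comm] at hcomp
  exact hcomp

lemma lsi_core (R r s ε : ℝ) (hR : 0 < R) (hr : 0 < r) (hs : 0 < s) (hε : 0 < ε)
    (g p D : ℝ → ℝ) (hg : Continuous g) (hp : Continuous p) (hD : Continuous D)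
    (hg0 : ∀ x, 0 ≤ g x) (hD0 : ∀ x, 0 ≤ D x) (hgp : ∀ x, HasDerivAt g (p x) x)
    (hpD : ∀ x, p x ^ 2 ≤ 4 * g x * D x) (hgl : g (-R) = 0) (hgr : g R = 0) :
    ∫ x in (-R)..R, g x * log (g x) ≤ 2 / s^2 * (∫ x in (-R)..R, D x) +
      (∫ x in (-R)..R, g x) * (log s - 1 - log (∫ t in (-r)..r, exp (-(t^2)/2)) +
        log ((∫ x in (-R)..R, g x) + 2 * R * ε)) := by
  set Z := ∫ t in (-r)..r, exp (-(t^2)/2) with hZ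
  set M := ∫ x in (-R)..R, g x with hM
  have hRR : -R ≤ R := by linarith
  have hM0 : 0 ≤ M := intervalIntegral.integral_nonneg hRR fun x _ => hg0 x
  have hZ0 : 0 < Z := intervalIntegral.intervalIntegral_pos_of_pos
    (Continuous.intervalIntegrable (by fun_prop) _ _) (fun _ => exp_pos _) (by linarith)
  have hN0 : 0 < M + 2 * R * ε := by positivity
  set N := M + 2 * R * ε with hN
  obtain ⟨T, hTc, hT⟩ := exists_transport r R hr (fun x => Z / N * (g x + ε)) (by fun_prop)
    (fun x => mul_pos (by positivity) (by linarith [hg0 x])) (by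
      rw [intervalIntegral.integral_const_mul, intervalIntegral.integral_add
        (hg.intervalIntegrable _ _) (by simp), intervalIntegral.integral_const, ← hM]
      have : M + (R - -R) • ε = N := by rw [hN, smul_eq_mul]; ring
      rw [this, ← hZ, div_mul_cancel₀ _ hN0.ne'])
  set T' : ℝ → ℝ := fun x => Z / N * (g x + ε) * exp ((T x)^2/2) with hT'
  have hT'c : Continuous T' := by fun_prop
  have hparts : ∫ x in (-R)..R, g x * T' x = - ∫ x in (-R)..R, p x * T x := by
    have := intervalIntegral.integral_mul_deriv_eq_deriv_mul (a := -R) (b := R) (u := g) (v := T)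
      (u' := p) (v' := T') (fun x _ => hgp x)
      (fun x hx => hT x (by rwa [Set.uIcc_of_le hRR] at hx)) (hp.intervalIntegrable _ _)
      (hT'c.intervalIntegrable _ _)
    rw [this, hgl, hgr]; ring
  have hglog : Continuous fun x => g x * log (g x) := by
    exact continuous_mul_log.comp hg
  have hpt : ∀ x, g x * log (g x) ≤ (1/s) * (g x * T' x) - (1/2) * (g x * (T x)^2) +
      (log s - 1 - log Z + log N) * g x := by
    intro x
    rcases (hg0 x).eq_or_lt with h0 | h0
    · simp [← h0]
    · have h1 : log (g x) ≤ log (g x + ε) := log_le_log h0 (by linarith)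
      have hge : 0 < g x + ε := by linarith
      have hlogT : log (T' x) = log Z - log N + log (g x + ε) + (T x)^2/2 := by
        simp only [hT']
        rw [log_mul (by positivity) (by positivity), log_mul (by positivity) (by positivity),
          log_div (by positivity) (by positivity), log_exp]
      have hT'0 : 0 < T' x := by simp only [hT']; positivity
      have h2 : log (T' x / s) ≤ T' x / s - 1 := log_le_sub_one_of_pos (by positivity)
      rw [log_div hT'0.ne' hs.ne'] at h2
      have h3 : log (g x) ≤ T' x / s - 1 + log s - log Z + log N - (T x)^2/2 := by linarith
      have := mul_le_mul_of_nonneg_left h3 h0.le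
      calc _ ≤ _ := this
        _ = _ := by ring
  have hI : ∀ {F : ℝ → ℝ}, Continuous F → IntervalIntegrable F volume (-R) R :=
    fun hF => hF.intervalIntegrable _ _
  have key1 := intervalIntegral.integral_mono_on hRR (hI hglog)
    (hI (F := fun x => (1/s) * (g x * T' x) - (1/2) * (g x * (T x)^2) +
      (log s - 1 - log Z + log N) * g x) (by fun_prop)) (fun x _ => hpt x)
  rw [intervalIntegral.integral_add (hI (by fun_prop)) (hI (by fun_prop)),
    intervalIntegral.integral_sub (hI (by fun_prop)) (hI (by fun_prop)),
    intervalIntegral.integral_const_mul, intervalIntegral.integral_const_mul,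
    intervalIntegral.integral_const_mul, hparts] at key1
  have hpt2 : ∀ x, (1/s) * (-(p x * T x)) ≤ 2/s^2 * D x + (1/2) * (g x * (T x)^2) := by
    intro x
    have ha : 0 ≤ 2/s^2 * D x := mul_nonneg (by positivity) (hD0 x)
    have hb : 0 ≤ (1/2) * (g x * (T x)^2) := by have := hg0 x; positivity
    refine le_of_abs_le (abs_le_of_sq_le_sq ?_ (by positivity))
    have h1 : ((1/s) * (-(p x * T x)))^2 = p x ^ 2 * ((T x)^2 / s^2) := by
      field_simp
    have h2 : p x ^ 2 * ((T x)^2 / s^2) ≤ 4 * g x * D x * ((T x)^2 / s^2) :=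
      mul_le_mul_of_nonneg_right (hpD x) (by positivity)
    have h3 : 4 * g x * D x * ((T x)^2 / s^2) = 4 * (2/s^2 * D x) * ((1/2) * (g x * (T x)^2)) := by
      field_simp
      try ring
    rw [h1]
    nlinarith [sq_nonneg (2/s^2 * D x - (1/2) * (g x * (T x)^2))]
  have key2 := intervalIntegral.integral_mono_on hRR
    (hI (F := fun x => (1/s) * (-(p x * T x))) (by fun_prop))
    (hI (F := fun x => 2/s^2 * D x + (1/2) * (g x * (T x)^2)) (by fun_prop)) (fun x _ => hpt2 x)
  rw [intervalIntegral.integral_add (hI (by fun_prop)) (hI (by fun_prop)),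
    intervalIntegral.integral_const_mul, intervalIntegral.integral_const_mul,
    intervalIntegral.integral_const_mul, intervalIntegral.integral_neg] at key2
  rw [← hM] at key1
  linarith

/-- One-dimensional inequality. -/
lemma lsi_one (s : ℝ) (hs : 0 < s)
    (g p D : ℝ → ℝ) (hg : Continuous g) (hp : Continuous p) (hD : Continuous D)
    (hgs : HasCompactSupport g) (hDs : HasCompactSupport D)
    (hg0 : ∀ x, 0 ≤ g x) (hD0 : ∀ x, 0 ≤ D x) (hgp : ∀ x, HasDerivAt g (p x) x)
    (hpD : ∀ x, p x ^ 2 ≤ 4 * g x * D x) :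
    ∫ x, g x * log (g x) ≤ 2 / s^2 * (∫ x, D x) +
      (∫ x, g x) * (log s - 1 - log (2 * π) / 2) + (∫ x, g x) * log (∫ x, g x) := by
  obtain ⟨R, hR, hsub⟩ : ∃ R : ℝ, 0 < R ∧ ∀ x, g x ≠ 0 → x ∈ Set.Ioo (-R) R := by
    obtain ⟨C, hC, h⟩ := hgs.isCompact.isBounded.subset_ball_lt 0 0
    refine ⟨C, hC, fun x hx => ?_⟩
    have := h (subset_tsupport g hx)
    simpa [abs_lt] using this
  have hRR : -R ≤ R := by linarith
  have e1 : ∀ F : ℝ → ℝ, (∀ x, g x = 0 → F x = 0) → ∫ x in (-R)..R, F x = ∫ x, F x := by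
    intro F hF
    apply intervalIntegral.integral_eq_integral_of_support_subset
    intro x hx
    have := hsub x (fun h => hx (hF x h))
    exact ⟨this.1, this.2.le⟩
  have hgl : g (-R) = 0 := by
    by_contra h; exact lt_irrefl _ (hsub _ h).1
  have hgr : g R = 0 := by
    by_contra h; exact lt_irrefl _ (hsub _ h).2
  have hM := e1 g (fun _ h => h)
  have hL := e1 (fun x => g x * log (g x)) (fun _ h => by simp [h])
  have hDle : ∫ x in (-R)..R, D x ≤ ∫ x, D x := by
    rw [intervalIntegral.integral_of_le hRR]
    exact setIntegral_le_integral (hD.integrable_of_hasCompactSupport hDs)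
      (Filter.Eventually.of_forall hD0)
  set M := ∫ x, g x with hMdef
  have hM0 : 0 ≤ M := integral_nonneg hg0
  have hcore : ∀ r ε : ℝ, 0 < r → 0 < ε → ∫ x, g x * log (g x) ≤ 2 / s^2 * (∫ x, D x) +
      M * (log s - 1 - log (∫ t in (-r)..r, exp (-(t^2)/2)) + log (M + 2 * R * ε)) := by
    intro r ε hr hε
    have := lsi_core R r s ε hR hr hs hε g p D hg hp hD hg0 hD0 hgp hpD hgl hgr
    rw [hM, hL] at this
    have h2 : 2 / s^2 * (∫ x in (-R)..R, D x) ≤ 2/s^2 * ∫ x, D x :=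
      mul_le_mul_of_nonneg_left hDle (by positivity)
    linarith
  have hgauss : ∫ t : ℝ, exp (-(t^2)/2) = √(2*π) := by
    have := integral_gaussian (1/2)
    rw [show π / (1/2) = 2 * π by ring] at this
    rw [← this]; congr 1; ext t; congr 1; ring
  have hgi : Integrable (fun t : ℝ => exp (-(t^2)/2)) := by
    have := integrable_exp_neg_mul_sq (b := 1/2) (by norm_num)
    refine this.congr (Filter.Eventually.of_forall fun t => ?_)
    simp only; congr 1; ring
  have hZ : Filter.Tendsto (fun r : ℝ => ∫ t in (-r)..r, exp (-(t^2)/2)) Filter.atTop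
      (nhds √(2*π)) := by
    rw [← hgauss]
    exact intervalIntegral_tendsto_integral hgi Filter.tendsto_neg_atTop_atBot Filter.tendsto_id
  rcases hM0.eq_or_lt with hM00 | hMpos
  · have := hcore 1 1 one_pos one_pos
    rw [← hM00] at this ⊢
    simpa using this
  have hlim : Filter.Tendsto (fun r : ℝ => 2 / s^2 * (∫ x, D x) +
      M * (log s - 1 - log (∫ t in (-r)..r, exp (-(t^2)/2)) + log (M + 2 * R * r⁻¹)))
      Filter.atTop (nhds (2 / s^2 * (∫ x, D x) +
      M * (log s - 1 - log (√(2*π)) + log (M + 2 * R * 0)))) := by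
    refine tendsto_const_nhds.add (tendsto_const_nhds.mul ((tendsto_const_nhds.sub
      (hZ.log (by positivity))).add (Filter.Tendsto.log ?_ ?_)))
    · exact tendsto_const_nhds.add (tendsto_const_nhds.mul tendsto_inv_atTop_zero)
    · simpa using hMpos.ne'
  have := ge_of_tendsto hlim (by
    filter_upwards [Filter.eventually_gt_atTop 0] with r hr
    exact hcore r r⁻¹ hr (by positivity))
  rw [log_sqrt (by positivity)] at this
  simp only [mul_zero, add_zero] at this
  linarith

section slices
variable {n : ℕ}

lemma cont_cons : Continuous (fun z : ℝ × (Fin n → ℝ) => (Fin.cons z.1 z.2 : Fin (n+1) → ℝ)) := by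
  refine continuous_pi fun i => ?_
  refine Fin.cases ?_ (fun j => ?_) i
  · simpa using continuous_fst
  · exact (continuous_apply j).comp continuous_snd

lemma cons_box (F : (Fin (n+1) → ℝ) → ℝ) (hFs : HasCompactSupport F) :
    ∃ R : ℝ, 0 < R ∧ ∀ t (y : Fin n → ℝ), F (Fin.cons t y) ≠ 0 → |t| ≤ R ∧ ‖y‖ ≤ R := by
  obtain ⟨C, hC, h⟩ := hFs.isCompact.isBounded.subset_ball_lt 0 0
  refine ⟨C, hC, fun t y hx => ?_⟩
  have := h (subset_tsupport F hx)
  have h2 : ‖(Fin.cons t y : Fin (n+1) → ℝ)‖ ≤ C := by simpa using (mem_ball_zero_iff.1 this).le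
  rw [pi_norm_le_iff_of_nonneg hC.le] at h2 ⊢
  refine ⟨by simpa using h2 0, fun i => by simpa using h2 i.succ⟩

lemma slice_cont (F : (Fin (n+1) → ℝ) → ℝ) (hF : Continuous F) (y : Fin n → ℝ) :
    Continuous (fun t => F (Fin.cons t y)) :=
  hF.comp (cont_cons.comp (by fun_prop : Continuous fun t : ℝ => (t, y)))

lemma slice_supp (F : (Fin (n+1) → ℝ) → ℝ) (hFs : HasCompactSupport F) (y : Fin n → ℝ) :
    HasCompactSupport (fun t => F (Fin.cons t y)) := by
  obtain ⟨R, hR, h⟩ := cons_box F hFs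
  refine HasCompactSupport.intro (isCompact_Icc (a := -R) (b := R)) fun t ht => ?_
  by_contra h0
  exact ht (abs_le.1 (h t y h0).1)

/-- Integrate out the zeroth variable. -/
noncomputable def marg (F : (Fin (n+1) → ℝ) → ℝ) (y : Fin n → ℝ) : ℝ := ∫ t, F (Fin.cons t y)

lemma marg_cont (F : (Fin (n+1) → ℝ) → ℝ) (hF : Continuous F) (hFs : HasCompactSupport F) :
    Continuous (marg F) := by
  obtain ⟨R, hR, h⟩ := cons_box F hFs
  have : marg F = fun y => ∫ t in Set.Icc (-R) R, F (Fin.cons t y) := by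
    ext y
    symm
    apply setIntegral_eq_integral_of_forall_compl_eq_zero
    intro t ht
    by_contra h0
    exact ht (abs_le.1 (h t y h0).1)
  rw [this]
  exact continuous_parametric_integral_of_continuous
    (f := fun (y : Fin n → ℝ) (t : ℝ) => F (Fin.cons t y))
    (hF.comp (cont_cons.comp continuous_swap)) isCompact_Icc

lemma marg_supp (F : (Fin (n+1) → ℝ) → ℝ) (hFs : HasCompactSupport F) :
    HasCompactSupport (marg F) := by
  obtain ⟨R, hR, h⟩ := cons_box F hFs
  refine HasCompactSupport.intro (isCompact_closedBall (0 : Fin n → ℝ) R) fun y hy => ?_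
  have : ∀ t, F (Fin.cons t y) = 0 := by
    intro t
    by_contra h0
    exact hy (mem_closedBall_zero_iff.2 (h t y h0).2)
  simp [marg, this]

lemma integral_marg (F : (Fin (n+1) → ℝ) → ℝ) (hF : Continuous F) (hFs : HasCompactSupport F) :
    ∫ y, marg F y = ∫ x, F x := by
  have hmp := (volume_preserving_piFinSuccAbove (fun _ : Fin (n+1) => ℝ) 0).symm
  have hi := hF.integrable_of_hasCompactSupport hFs (μ := volume)
  have hi2 := (hmp.integrable_comp_emb (MeasurableEquiv.measurableEmbedding _)).2 hi
  rw [← hmp.integral_comp (MeasurableEquiv.measurableEmbedding _) F]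
  rw [Measure.volume_eq_prod] at hi2 ⊢
  have h3 := integral_prod_symm _ hi2
  simp only [Function.comp_def] at h3
  rw [h3]
  congr 1; ext y
  simp only [marg]
  congr 1; ext t
  simp [MeasurableEquiv.piFinSuccAbove, Fin.insertNthEquiv]

lemma marg_deriv (g p : (Fin (n+1) → ℝ) → ℝ) (hg : Continuous g) (hgs : HasCompactSupport g)
    (hp : Continuous p) (hps : HasCompactSupport p) (i : Fin n)
    (h : ∀ x, HasDerivAt (fun t => g (Function.update x i.succ t)) (p x) (x i.succ))
    (y : Fin n → ℝ) :
    HasDerivAt (fun t => marg g (Function.update y i t)) (marg p y) (y i) := by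
  obtain ⟨R, hR, hbox⟩ := cons_box p hps
  obtain ⟨C, hC⟩ := hps.exists_bound_of_continuous hp
  have key := hasDerivAt_integral_of_dominated_loc_of_deriv_le (μ := volume) (𝕜 := ℝ)
    (F := fun u t => g (Fin.cons t (Function.update y i u)))
    (F' := fun u t => p (Fin.cons t (Function.update y i u)))
    (x₀ := y i) (s := Set.univ) (bound := Set.indicator (Set.Icc (-R) R) fun _ => C)
    Filter.univ_mem
    (Filter.Eventually.of_forall fun u => (slice_cont g hg _).aestronglyMeasurable)
    ((slice_cont g hg _).integrable_of_hasCompactSupport (slice_supp g hgs _))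
    ((slice_cont p hp _).aestronglyMeasurable)
    (Filter.Eventually.of_forall fun t u _ => by
      by_cases h0 : p (Fin.cons t (Function.update y i u)) = 0
      · rw [h0, norm_zero]
        refine Set.indicator_nonneg (fun _ _ => (norm_nonneg _).trans (hC 0)) _
      · rw [Set.indicator_of_mem (show t ∈ Set.Icc (-R) R from abs_le.1 (hbox _ _ h0).1)]
        exact hC _)
    ((integrable_indicator_iff measurableSet_Icc).2 (by simp))
    (Filter.Eventually.of_forall fun t u _ => by
      have := h (Fin.cons t (Function.update y i u))
      simpa [← Fin.cons_update] using this)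
  simpa [marg] using key.2

end slices

lemma integral_add3 {α : Type*} [MeasurableSpace α] {μ : Measure α} {a b c : α → ℝ}
    (ha : Integrable a μ) (hb : Integrable b μ) (hc : Integrable c μ) :
    Integrable (fun x => a x + b x + c x) μ ∧
      ∫ x, (a x + b x + c x) ∂μ = ∫ x, a x ∂μ + ∫ x, b x ∂μ + ∫ x, c x ∂μ := by
  have hab : Integrable (fun x => a x + b x) μ := ha.add hb
  exact ⟨hab.add hc, by rw [integral_add hab hc, integral_add ha hb]⟩

lemma quad_nonneg {g p D : ℝ} (hg : 0 ≤ g) (hD : 0 ≤ D) (h : p^2 ≤ 4*g*D) (t : ℝ) :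
    0 ≤ g * (t*t) + p * t + D := by
  rcases hg.eq_or_lt with h0 | h0
  · subst h0
    have : p = 0 := by
      have : p^2 ≤ 0 := by simpa using h
      exact pow_eq_zero_iff (two_ne_zero) |>.1 (le_antisymm this (sq_nonneg p))
    simp [this, hD]
  · have : 0 ≤ 4 * g * (g * (t*t) + p * t + D) := by nlinarith [sq_nonneg (2*g*t+p)]
    exact (mul_nonneg_iff_of_pos_left (by positivity)).1 this

lemma marg_CS {n : ℕ} (g p D : (Fin (n+1) → ℝ) → ℝ) (hg : Continuous g) (hp : Continuous p)
    (hD : Continuous D) (hgs : HasCompactSupport g) (hps : HasCompactSupport p)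
    (hDs : HasCompactSupport D)
    (hg0 : ∀ x, 0 ≤ g x) (hD0 : ∀ x, 0 ≤ D x)
    (hpD : ∀ x, p x ^ 2 ≤ 4 * g x * D x) (y : Fin n → ℝ) :
    marg p y ^ 2 ≤ 4 * marg g y * marg D y := by
  have ig := (slice_cont g hg y).integrable_of_hasCompactSupport (slice_supp g hgs y) (μ := volume)
  have ip := (slice_cont p hp y).integrable_of_hasCompactSupport (slice_supp p hps y) (μ := volume)
  have iD := (slice_cont D hD y).integrable_of_hasCompactSupport (slice_supp D hDs y) (μ := volume)
  have := discrim_le_zero (a := marg g y) (b := marg p y) (c := marg D y) (by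
    intro u
    have h0 : 0 ≤ ∫ t, (g (Fin.cons t y) * (u*u) + p (Fin.cons t y) * u + D (Fin.cons t y)) :=
      integral_nonneg fun t => quad_nonneg (hg0 _) (hD0 _) (hpD _) u
    rw [(integral_add3 (ig.mul_const _) (ip.mul_const _) iD).2, integral_mul_const,
      integral_mul_const] at h0
    exact h0)
  rw [discrim] at this
  linarith

lemma lsi_pi (s : ℝ) (hs : 0 < s) : ∀ (n : ℕ) (g : (Fin n → ℝ) → ℝ)
    (p D : Fin n → (Fin n → ℝ) → ℝ) (_ : Continuous g) (_ : ∀ i, Continuous (p i))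
    (_ : ∀ i, Continuous (D i)) (_ : HasCompactSupport g) (_ : ∀ i, HasCompactSupport (p i))
    (_ : ∀ i, HasCompactSupport (D i)) (_ : ∀ x, 0 ≤ g x) (_ : ∀ i x, 0 ≤ D i x)
    (_ : ∀ i x, HasDerivAt (fun t => g (Function.update x i t)) (p i x) (x i))
    (_ : ∀ i x, p i x ^ 2 ≤ 4 * g x * D i x),
    ∫ x, g x * log (g x) ≤ 2 / s^2 * (∑ i, ∫ x, D i x) +
      n * ((∫ x, g x) * (log s - 1 - log (2 * π) / 2)) + (∫ x, g x) * log (∫ x, g x) := by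
  intro n
  induction n with
  | zero =>
    intro g p D _ _ _ _ _ _ _ _ _ _
    simp [Measure.volume_pi_eq_dirac (0 : Fin 0 → ℝ)]
  | succ n ih =>
    intro g p D hg hp hD hgs hps hDs hg0 hD0 hgp hpD
    have hglog : Continuous fun x => g x * log (g x) := continuous_mul_log.comp hg
    have hglogs : HasCompactSupport fun x => g x * log (g x) := hgs.mul_right
    have hm := marg_cont g hg hgs
    have hms := marg_supp g hgs
    have hm0 : ∀ y, 0 ≤ marg g y := fun y => integral_nonneg fun t => hg0 _
    have hIH := ih (marg g) (fun i => marg (p i.succ)) (fun i => marg (D i.succ)) hm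
      (fun i => marg_cont _ (hp _) (hps _)) (fun i => marg_cont _ (hD _) (hDs _)) hms
      (fun i => marg_supp _ (hps _)) (fun i => marg_supp _ (hDs _)) hm0
      (fun i y => integral_nonneg fun t => hD0 _ _)
      (fun i y => marg_deriv g _ hg hgs (hp _) (hps _) i (hgp i.succ) y)
      (fun i y => marg_CS g _ _ hg (hp _) (hD _) hgs (hps _) (hDs _) hg0 (hD0 _) (hpD _) y)
    have hone : ∀ y, marg (fun x => g x * log (g x)) y ≤ 2 / s^2 * marg (D 0) y +
        marg g y * (log s - 1 - log (2 * π) / 2) + marg g y * log (marg g y) := by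
      intro y
      refine lsi_one s hs (fun t => g (Fin.cons t y)) (fun t => p 0 (Fin.cons t y))
        (fun t => D 0 (Fin.cons t y)) (slice_cont g hg y) (slice_cont _ (hp 0) y)
        (slice_cont _ (hD 0) y) (slice_supp g hgs y) (slice_supp _ (hDs 0) y)
        (fun t => hg0 _) (fun t => hD0 _ _) (fun t => ?_) (fun t => hpD _ _)
      have := hgp 0 (Fin.cons t y)
      simpa [Fin.update_cons_zero] using this
    have hmlog : Continuous fun y => marg g y * log (marg g y) := continuous_mul_log.comp hm
    have hmlogs : HasCompactSupport fun y => marg g y * log (marg g y) := hms.mul_right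
    have i0 := (marg_cont _ hglog hglogs).integrable_of_hasCompactSupport (marg_supp _ hglogs)
      (μ := volume)
    have i1 := (marg_cont _ (hD 0) (hDs 0)).integrable_of_hasCompactSupport (marg_supp _ (hDs 0))
      (μ := volume)
    have i2 := hm.integrable_of_hasCompactSupport hms (μ := volume)
    have i3 := hmlog.integrable_of_hasCompactSupport hmlogs (μ := volume)
    have h3 := integral_add3 (i1.const_mul (2/s^2))
      (i2.mul_const (log s - 1 - log (2 * π) / 2)) i3
    have hintg := integral_mono i0 h3.1 hone
    rw [h3.2,
      integral_const_mul, integral_mul_const, integral_marg _ hglog hglogs,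
      integral_marg _ hg hgs, integral_marg _ (hD 0) (hDs 0)] at hintg
    rw [integral_marg _ hg hgs] at hIH
    simp only [integral_marg _ (hD _) (hDs _)] at hIH
    rw [Fin.sum_univ_succ]
    push_cast
    linarith

lemma exists_L (n : ℕ) : ∃ L : (Fin n → ℝ) ≃L[ℝ] EuclideanSpace ℝ (Fin n),
    (∀ F : EuclideanSpace ℝ (Fin n) → ℝ, ∫ x, F (L x) = ∫ x, F x) ∧
    ∀ i, L (Pi.single i 1) = EuclideanSpace.single i (1:ℝ) := by
  refine ⟨(EuclideanSpace.equiv (Fin n) ℝ).symm, fun F => ?_, fun i => rfl⟩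
  exact (PiLp.volume_preserving_toLp (Fin n)).integral_comp
      (MeasurableEquiv.toLp 2 (Fin n → ℝ)).measurableEmbedding F

lemma lsi_E (s : ℝ) (hs : 0 < s) (n : ℕ) (f : EuclideanSpace ℝ (Fin n) → ℝ)
    (hf : ContDiff ℝ 1 f) (hfs : HasCompactSupport f) :
    ∫ x, f x ^ 2 * log (f x ^ 2) ≤ 2 / s^2 * (∫ x, ‖gradient f x‖ ^ 2) +
      n * ((∫ x, f x ^ 2) * (log s - 1 - log (2 * π) / 2)) +
      (∫ x, f x ^ 2) * log (∫ x, f x ^ 2) := by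
  obtain ⟨L, hLi, hLs1⟩ := exists_L n
  obtain ⟨d, hd⟩ : ∃ d : Fin n → EuclideanSpace ℝ (Fin n) → ℝ, ∀ i x, d i x =
    fderiv ℝ f x (L (Pi.single i 1)) := ⟨_, fun _ _ => rfl⟩
  have hfc := hf.continuous
  have hdc : ∀ i, Continuous (d i) := fun i => by
    rw [show d i = fun x => fderiv ℝ f x (L (Pi.single i 1)) from funext (hd i)]
    exact (hf.continuous_fderiv one_ne_zero).clm_apply continuous_const
  have hds : ∀ i, HasCompactSupport (d i) := fun i => by
    rw [show d i = fun x => fderiv ℝ f x (L (Pi.single i 1)) from funext (hd i)]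
    exact hfs.fderiv_apply (𝕜 := ℝ) _
  have hLs : ∀ F : EuclideanSpace ℝ (Fin n) → ℝ, HasCompactSupport F →
      HasCompactSupport fun x => F (L x) := fun _ hF => hF.comp_homeomorph L.toHomeomorph
  have hgrad : ∀ x, ‖gradient f x‖^2 = ∑ i, d i x ^ 2 := by
    intro x
    rw [EuclideanSpace.real_norm_sq_eq]
    refine Finset.sum_congr rfl fun i _ => ?_
    congr 1
    have h1 : inner ℝ (gradient f x) (EuclideanSpace.single i (1:ℝ)) = fderiv ℝ f x _ :=
      inner_gradient_left
    rw [EuclideanSpace.inner_single_right] at h1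
    simp only [one_mul] at h1
    simp only [hd, hLs1]
    exact h1
  have hf2s : HasCompactSupport fun x => f x ^ 2 := by
    simp only [sq]; exact hfs.mul_right (f' := f)
  have hd2s : ∀ i, HasCompactSupport fun x => d i x ^ 2 := fun i => by
    simp only [sq]; exact (hds i).mul_right (f' := d i)
  have hder : ∀ (i : Fin n) (x : Fin n → ℝ),
      HasDerivAt (fun t => f (L (Function.update x i t)) ^ 2) (2 * f (L x) * d i (L x)) (x i) := by
    intro i x
    have h1 : HasDerivAt (fun t => Function.update x i t) (Pi.single i 1) (x i) :=
      hasDerivAt_update x i (x i)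
    have h2 : HasDerivAt (fun t => L (Function.update x i t)) (L (Pi.single i 1)) (x i) :=
      L.hasFDerivAt.comp_hasDerivAt (x i) h1
    have h3 : HasFDerivAt f (fderiv ℝ f (L x)) (L (Function.update x i (x i))) := by
      rw [Function.update_eq_self]
      exact (hf.differentiable one_ne_zero _).hasFDerivAt
    have h4 : HasDerivAt (fun t => f (L (Function.update x i t))) (d i (L x)) (x i) := by
      rw [hd]
      exact h3.comp_hasDerivAt (x i) h2
    have h5 := h4.fun_pow 2
    rw [Function.update_eq_self] at h5
    simpa using h5
  have a1 : Continuous fun x => f (L x) ^ 2 := (hfc.comp L.continuous).pow 2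
  have a2 : ∀ i, Continuous fun x => d i (L x) := fun i => (hdc i).comp L.continuous
  have a3 : ∀ i, Continuous fun x => 2 * f (L x) * d i (L x) := fun i =>
    (continuous_const.mul (hfc.comp L.continuous)).mul (a2 i)
  have a4 : ∀ i, Continuous fun x => d i (L x) ^ 2 := fun i => (a2 i).pow 2
  have b1 : HasCompactSupport fun x => f (L x) ^ 2 := hLs (fun x => f x ^ 2) hf2s
  have b2 : ∀ i, HasCompactSupport fun x => d i (L x) := fun i => hLs (d i) (hds i)
  have b3 : ∀ i, HasCompactSupport fun x => 2 * f (L x) * d i (L x) := fun i =>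
    HasCompactSupport.mul_left (f := fun x => 2 * f (L x)) (b2 i)
  have b4 : ∀ i, HasCompactSupport fun x => d i (L x) ^ 2 := fun i => hLs (fun x => d i x ^ 2) (hd2s i)
  have c1 : ∀ x, 0 ≤ f (L x) ^ 2 := fun x => sq_nonneg (f (L x))
  have c2 : ∀ i x, 0 ≤ d i (L x) ^ 2 := fun i x => sq_nonneg (d i (L x))
  have c3 : ∀ i x, (2 * f (L x) * d i (L x)) ^ 2 ≤ 4 * f (L x) ^ 2 * d i (L x) ^ 2 := fun i x =>
    le_of_eq (by ring)
  have key := lsi_pi s hs n (fun x => f (L x) ^ 2) (fun i x => 2 * f (L x) * d i (L x))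
    (fun i x => d i (L x) ^ 2) a1 a3 a4 b1 b3 b4
    c1 c2 hder c3
  rw [hLi (fun x => f x ^ 2 * log (f x ^ 2)), hLi (fun x => f x ^ 2)] at key
  have hDi : ∀ i, ∫ x, d i (L x) ^ 2 = ∫ x, d i x ^ 2 := fun i => hLi (fun x => d i x ^ 2)
  have hG : ∫ x, ‖gradient f x‖ ^ 2 = ∑ i, ∫ x, d i x ^ 2 := by
    simp only [hgrad]
    exact integral_finsetSum _ fun i _ =>
      ((hdc i).pow 2).integrable_of_hasCompactSupport (hd2s i)
  rw [hG]
  simp only [hDi] at key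
  exact key

lemma norm_gradient_eq {n : ℕ} (f : EuclideanSpace ℝ (Fin n) → ℝ) (x : EuclideanSpace ℝ (Fin n)) :
    ‖gradient f x‖ = ‖fderiv ℝ f x‖ := by
  rw [← toDual_gradient, LinearIsometryEquiv.norm_map]

lemma lsi_full (s : ℝ) (hs : 0 < s) (n : ℕ) (f : EuclideanSpace ℝ (Fin n) → ℝ)
    (hf : ContDiff ℝ 1 f) (hf_norm : ∫ x, f x ^ 2 = 1)
    (hf_grad : Integrable (fun x => ‖gradient f x‖ ^ 2))
    (hf_ent : Integrable (fun x => f x ^ 2 * Real.log (f x ^ 2))) :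
    ∫ x, f x ^ 2 * log (f x ^ 2) ≤ 2 / s^2 * (∫ x, ‖gradient f x‖ ^ 2) +
      n * (log s - 1 - log (2 * π) / 2) := by
  have hf2 : Integrable (fun x => f x ^ 2) := by
    by_contra h
    rw [integral_undef h] at hf_norm
    exact zero_ne_one hf_norm
  set χ : ContDiffBump (0 : EuclideanSpace ℝ (Fin n)) := ⟨1, 2, one_pos, one_lt_two⟩ with hχ
  have hχc : ContDiff ℝ 1 χ := χ.contDiff
  obtain ⟨C, hC⟩ : ∃ C, ∀ x, ‖fderiv ℝ χ x‖ ≤ C :=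
    (χ.hasCompactSupport.fderiv (𝕜 := ℝ)).exists_bound_of_continuous
      (hχc.continuous_fderiv one_ne_zero)
  have hC0 : 0 ≤ C := (norm_nonneg _).trans (hC 0)
  set c : ℕ → ℝ := fun k => ((k:ℝ)+1)⁻¹ with hc
  have hc0 : ∀ k, 0 < c k := fun k => by simp only [hc]; positivity
  have hc1 : ∀ k, c k ≤ 1 := fun k => by
    simp only [hc]; exact inv_le_one_of_one_le₀ (by linarith [k.cast_nonneg (α := ℝ)])
  set η : ℕ → EuclideanSpace ℝ (Fin n) → ℝ := fun k x => χ (c k • x) with hη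
  have hη0 : ∀ k x, 0 ≤ η k x := fun k x => χ.nonneg
  have hη1 : ∀ k x, η k x ≤ 1 := fun k x => χ.le_one
  have hηc : ∀ k, ContDiff ℝ 1 (η k) := fun k => hχc.comp (contDiff_const_smul (c k))
  have hηs : ∀ k, HasCompactSupport (η k) := fun k =>
    χ.hasCompactSupport.comp_smul (hc0 k).ne'
  have hηd : ∀ k x, ‖fderiv ℝ (η k) x‖ ≤ C := by
    intro k x
    have : fderiv ℝ (η k) x = c k • fderiv ℝ χ (c k • x) := by
      simp only [hη]
      exact fderiv_comp_smul (c k)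
    rw [this, norm_smul, Real.norm_of_nonneg (hc0 k).le]
    calc c k * _ ≤ 1 * C := mul_le_mul (hc1 k) (hC _) (norm_nonneg _) zero_le_one
      _ = C := one_mul C
  set F : ℕ → EuclideanSpace ℝ (Fin n) → ℝ := fun k x => η k x * f x with hF
  have hFc : ∀ k, ContDiff ℝ 1 (F k) := fun k => (hηc k).mul hf
  have hFs : ∀ k, HasCompactSupport (F k) := fun k => (hηs k).mul_right
  have hev : ∀ x, ∀ᶠ k in Filter.atTop, F k =ᶠ[nhds x] f := by
    intro x
    obtain ⟨m, hm⟩ := exists_nat_gt ‖x‖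
    filter_upwards [Filter.eventually_ge_atTop m] with k hk
    have hopen : {y : EuclideanSpace ℝ (Fin n) | ‖y‖ < (k:ℝ) + 1} ∈ nhds x :=
      (isOpen_lt continuous_norm continuous_const).mem_nhds (by
        have : (m:ℝ) ≤ k := by exact_mod_cast hk
        show ‖x‖ < (k:ℝ) + 1
        linarith)
    filter_upwards [hopen] with y hy
    have : η k y = 1 := by
      apply χ.one_of_mem_closedBall
      rw [mem_closedBall_zero_iff, norm_smul, Real.norm_of_nonneg (hc0 k).le]
      simp only [hc, hχ]
      rw [inv_mul_le_iff₀ (by positivity)]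
      have hy' : ‖y‖ < (k:ℝ) + 1 := hy
      linarith
    simp [hF, this]
  -- mass
  have hmass : Filter.Tendsto (fun k => ∫ x, F k x ^ 2) Filter.atTop (nhds 1) := by
    rw [← hf_norm]
    refine tendsto_integral_of_dominated_convergence (fun x => f x ^ 2)
      (fun k => ((hFc k).continuous.pow 2).aestronglyMeasurable) hf2
      (fun k => Filter.Eventually.of_forall fun x => ?_)
      (Filter.Eventually.of_forall fun x => ?_)
    · rw [Real.norm_of_nonneg (sq_nonneg _)]
      simp only [hF, mul_pow]
      exact mul_le_of_le_one_left (sq_nonneg _) (pow_le_one₀ (hη0 k x) (hη1 k x))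
    · exact tendsto_const_nhds.congr' ((hev x).mono fun k hk => by simp only [hk.eq_of_nhds])
  -- entropy
  have hent : Filter.Tendsto (fun k => ∫ x, F k x ^ 2 * log (F k x ^ 2)) Filter.atTop
      (nhds (∫ x, f x ^ 2 * log (f x ^ 2))) := by
    refine tendsto_integral_of_dominated_convergence
      (fun x => f x ^ 2 + ‖f x ^ 2 * log (f x ^ 2)‖)
      (fun k => (continuous_mul_log.comp ((hFc k).continuous.pow 2)).aestronglyMeasurable)
      (hf2.add hf_ent.norm)
      (fun k => Filter.Eventually.of_forall fun x => ?_)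
      (Filter.Eventually.of_forall fun x => ?_)
    · rcases (hη0 k x).eq_or_lt with h0 | h0
      · simp only [hF, ← h0]
        simp only [zero_mul, ne_eq, OfNat.ofNat_ne_zero, not_false_eq_true, zero_pow, norm_zero]
        positivity
      by_cases hfx : f x = 0
      · simp [hF, hfx]
      have hu0 : 0 < η k x ^ 2 := by positivity
      have hu1 : η k x ^ 2 ≤ 1 := pow_le_one₀ (hη0 k x) (hη1 k x)
      have e : F k x ^ 2 * log (F k x ^ 2) = (log (η k x ^ 2) * η k x ^ 2) * f x ^ 2 +
          η k x ^ 2 * (f x ^ 2 * log (f x ^ 2)) := by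
        simp only [hF, mul_pow]
        rw [log_mul hu0.ne' (by positivity)]; ring
      rw [e]
      refine (norm_add_le _ _).trans (add_le_add ?_ ?_)
      · rw [norm_mul, Real.norm_of_nonneg (sq_nonneg (f x)), Real.norm_eq_abs]
        exact mul_le_of_le_one_left (sq_nonneg _) (abs_log_mul_self_lt _ hu0 hu1).le
      · rw [norm_mul, Real.norm_of_nonneg hu0.le]
        exact mul_le_of_le_one_left (norm_nonneg _) hu1
    · exact tendsto_const_nhds.congr' ((hev x).mono fun k hk => by simp only [hk.eq_of_nhds])
  -- gradient
  have hgr : Filter.Tendsto (fun k => ∫ x, ‖gradient (F k) x‖ ^ 2) Filter.atTop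
      (nhds (∫ x, ‖gradient f x‖ ^ 2)) := by
    simp only [norm_gradient_eq] at hf_grad ⊢
    refine tendsto_integral_of_dominated_convergence
      (fun x => 2 * ‖fderiv ℝ f x‖ ^ 2 + 2 * C^2 * f x ^ 2)
      (fun k => (((hFc k).continuous_fderiv one_ne_zero).norm.pow 2).aestronglyMeasurable)
      ((hf_grad.const_mul _).add (hf2.const_mul _))
      (fun k => Filter.Eventually.of_forall fun x => ?_)
      (Filter.Eventually.of_forall fun x => ?_)
    · rw [Real.norm_of_nonneg (sq_nonneg _)]
      have e : fderiv ℝ (F k) x = η k x • fderiv ℝ f x + f x • fderiv ℝ (η k) x :=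
        fderiv_fun_mul ((hηc k).differentiable one_ne_zero x) (hf.differentiable one_ne_zero x)
      have hb : ‖fderiv ℝ (F k) x‖ ≤ ‖fderiv ℝ f x‖ + |f x| * C := by
        rw [e]
        refine (norm_add_le _ _).trans (add_le_add ?_ ?_)
        · rw [norm_smul, Real.norm_of_nonneg (hη0 k x)]
          exact mul_le_of_le_one_left (norm_nonneg _) (hη1 k x)
        · rw [norm_smul, Real.norm_eq_abs]
          exact mul_le_mul_of_nonneg_left (hηd k x) (abs_nonneg _)
      calc ‖fderiv ℝ (F k) x‖ ^ 2 ≤ (‖fderiv ℝ f x‖ + |f x| * C)^2 :=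
            pow_le_pow_left₀ (norm_nonneg _) hb 2
        _ ≤ 2 * ‖fderiv ℝ f x‖ ^ 2 + 2 * (|f x| * C)^2 := by
            nlinarith [sq_nonneg (‖fderiv ℝ f x‖ - |f x| * C)]
        _ = _ := by rw [mul_pow, sq_abs]; ring
    · exact tendsto_const_nhds.congr' ((hev x).mono fun k hk => by simp only [hk.fderiv_eq])
  have hlim := (hgr.const_mul (2 / s^2)).add
    ((hmass.mul_const (log s - 1 - log (2 * π) / 2)).const_mul (n : ℝ)) |>.add
    (hmass.mul (hmass.log one_ne_zero))
  have := le_of_tendsto_of_tendsto' hent hlim fun k => lsi_E s hs n (F k) (hFc k) (hFs k)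
  simpa using this

/-- The Stam-type logarithmic Sobolev inequality on `ℝⁿ` with the sharp dimensional
constant: for smooth `f` with `∫ f² = 1`,
`∫ f² log f² ≤ (n/2) log((2/(πen)) ∫ |∇f|²)`. -/
theorem stam_log_sobolev (n : ℕ) (hn : 1 ≤ n)
    (f : EuclideanSpace ℝ (Fin n) → ℝ)
    (hf_smooth : ContDiff ℝ (⊤ : ℕ∞) f)
    (hf_norm : ∫ x, f x ^ 2 = 1)
    (hf_grad : Integrable (fun x => ‖gradient f x‖ ^ 2))
    (hf_ent : Integrable (fun x => f x ^ 2 * Real.log (f x ^ 2))) :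
    ∫ x, f x ^ 2 * Real.log (f x ^ 2) ≤
      ((n : ℝ) / 2) *
        Real.log ((2 / (π * Real.exp 1 * n)) * ∫ x, ‖gradient f x‖ ^ 2) := by
  have hf1 : ContDiff ℝ 1 f := hf_smooth.of_le (by exact_mod_cast le_top)
  have key := fun s hs => lsi_full s hs n f hf1 hf_norm hf_grad hf_ent
  set A := ∫ x, ‖gradient f x‖ ^ 2 with hA
  set H := ∫ x, f x ^ 2 * Real.log (f x ^ 2) with hH
  have hA0 : 0 ≤ A := integral_nonneg fun x => sq_nonneg _
  have hn0 : (0:ℝ) < n := by exact_mod_cast hn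
  rcases hA0.eq_or_lt with h0 | hApos
  · exfalso
    have h1 := key (exp (H / n + log (2*π)/2)) (exp_pos _)
    rw [← h0, log_exp] at h1
    have h2 : (n:ℝ) * (H / n + log (2*π)/2 - 1 - log (2 * π) / 2) = H - n := by
      field_simp; ring
    rw [h2] at h1
    linarith
  · have h1 := key (√(4 * A / n)) (by positivity)
    rw [sq_sqrt (by positivity), log_sqrt (by positivity)] at h1
    refine h1.trans (le_of_eq ?_)
    have e1 : 2 / (π * exp 1 * n) * A = (4 * A / n) / (2 * π) / exp 1 := by
      field_simp; ring
    have hq : 0 < 4 * A / n := by positivity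
    rw [e1]
    generalize hqq : 4 * A / n = q at *
    rw [log_div (by positivity) (by positivity), log_div hq.ne' (by positivity), log_exp]
    have e2 : 2 / q * A = n / 2 := by rw [← hqq]; field_simp; norm_num
    rw [e2]; ring
end
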